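/- arXiv:1902.07146 — 2 statements merged into one kernel-verified Lean document; each statement's English description precedes it below -/
import Mathlib

section
/- Suppose φ : Ω → ℝ is continuous, satisfies Walters' condition, and satisfies one of: (1) W_n(φ) = O(θ^n); (2) W_n(φ) = O(n^{−α}) for some α > 1; (3) W_n(φ) = O(θ₀^{(log n)^α}) for some θ₀ ∈ (0,1) and α > 1; (4) W_n(φ) = O(e^{−c n^α}) for some c > 0 and α ∈ (0,1). Let μ_φ = h·ν be the associated equilibrium state, where λ > 0, h : Ω → ℝ is strictly positive continuous, ν is a Borel probability measure, P_φ h = λ h, ∫ P_φ f dν = λ ∫ f dν for all continuous f, and ∫ h dν = 1. Then there exists a constant D > 0 such that for every ψ ∈ L_φ, every u > 0 and every n ≥ 1: μ_φ{x ∈ Ω : (1/n) S_nψ(x) − ∫ ψ dμ_φ ≥ u} ≤ exp(−n u²/(4D Lip_φ(ψ)²)). -/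
open MeasureTheory Filter Topology
open scoped ENNReal NNReal BigOperators

noncomputable section

/-- The shift map on `Ω = Aℕ`. -/
def shift {A : Type*} (x : ℕ → A) : ℕ → A := fun k => x (k + 1)

/-- Prepend a symbol `a` to `x`. -/
def cons {A : Type*} (a : A) (x : ℕ → A) : ℕ → A := fun k =>
  match k with
  | 0 => a
  | k + 1 => x k

/-- Prepend a word `a ∈ Aⁿ` to `x`. -/
def wcat {A : Type*} {n : ℕ} (a : Fin n → A) (x : ℕ → A) : ℕ → A := fun k =>
  if h : k < n then a ⟨k, h⟩ else x (k - n)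

/-- The metric `d_θ(x,y) = θ^(first disagreement)`. -/
def dtheta {A : Type*} (θ : ℝ) (x y : ℕ → A) : ℝ :=
  letI := Classical.dec (x = y)
  if x = y then 0 else θ ^ sInf {k | x k ≠ y k}

/-- `K : Ωⁿ → ℝ` is separately `d_θ`-Lipschitz with constants `ℓ i`. -/
def SepLip {A : Type*} (θ : ℝ) {n : ℕ} (K : (Fin n → (ℕ → A)) → ℝ) (ℓ : Fin n → ℝ) : Prop :=
  ∀ (x : Fin n → (ℕ → A)) (i : Fin n) (x' : ℕ → A),
    |K x - K (Function.update x i x')| ≤ ℓ i * dtheta θ (x i) x'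

/-- Gaussian concentration bound with constant `C`. -/
def GCB {A : Type*} [MeasurableSpace A] (θ C : ℝ) (μ : Measure (ℕ → A)) : Prop :=
  ∀ (n : ℕ), 1 ≤ n → ∀ (K : (Fin n → (ℕ → A)) → ℝ) (ℓ : Fin n → ℝ), SepLip θ K ℓ →
    ∫ x, Real.exp (K (fun i => shift^[(i : ℕ)] x)) ∂μ ≤
      Real.exp (∫ y, K (fun i => shift^[(i : ℕ)] y) ∂μ) * Real.exp (C * ∑ j, ℓ j ^ 2)

/-- Birkhoff sum `S_n f`. -/
def birk {A : Type*} (f : (ℕ → A) → ℝ) (n : ℕ) (x : ℕ → A) : ℝ :=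
  ∑ i ∈ Finset.range n, f (shift^[i] x)

/-- Variation `var_n(φ)` (as an extended real). -/
def evar {A : Type*} (φ : (ℕ → A) → ℝ) (n : ℕ) : ℝ≥0∞ :=
  ⨆ (x : ℕ → A) (y : ℕ → A) (_ : ∀ i < n, x i = y i), ENNReal.ofReal |φ x - φ y|

/-- `W(φ,x,y)` (as an extended real). -/
def Wpair {A : Type*} (φ : (ℕ → A) → ℝ) (x y : ℕ → A) : ℝ≥0∞ :=
  ⨆ (n : ℕ) (a : Fin n → A), ENNReal.ofReal |birk φ n (wcat a x) - birk φ n (wcat a y)|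

/-- `W_p(φ)` (as an extended real). -/
def Wp {A : Type*} (φ : (ℕ → A) → ℝ) (p : ℕ) : ℝ≥0∞ :=
  ⨆ (x : ℕ → A) (y : ℕ → A) (_ : ∀ i < p, x i = y i), Wpair φ x y

/-- Walters' condition. -/
def Walters {A : Type*} (φ : (ℕ → A) → ℝ) : Prop :=
  (⨆ (x : ℕ → A) (y : ℕ → A), Wpair φ x y) ≠ ⊤ ∧ (∀ p, 0 < Wp φ p) ∧
    Antitone (Wp φ) ∧ Tendsto (Wp φ) atTop (𝓝 0)

/-- Ruelle's transfer operator `P_φ`. -/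
def transfer {A : Type*} [Fintype A] (φ f : (ℕ → A) → ℝ) (x : ℕ → A) : ℝ :=
  ∑ a : A, Real.exp (φ (cons a x)) * f (cons a x)
/-- The seminorm `Lip_φ(ψ) = sup_n var_n(ψ)/W_n(φ)` (as an extended real). -/
def eLip {A : Type*} (φ ψ : (ℕ → A) → ℝ) : ℝ≥0∞ :=
  ⨆ n : ℕ, evar ψ n / Wp φ n

/-
Dividing out the eigenfunction `h` turns `P_φ` into a transfer operator `P` that averages over
preimages and satisfies `∫ P f dμ_φ = ∫ f dμ_φ`. Let `D_k = ∑_{i<k} P^i ψ`. Weights on the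
preimages of points agreeing up to `p` differ by a factor of at most `exp (3 W_p)`, so a coupling
argument bounds the oscillation of all `D_k` by `M = exp (∑ 3 W_p) * ∑ Lip_φ(ψ) W_p`, and
`∑ W_p < ∞` under each decay rate. Applying `P` inside the integral of
`exp (t (S_m ψ ∘ T + D_k))` and using Hoeffding's lemma for the average over preimages replaces
`(m, k)` by `(m - 1, k + 1)` at the cost of a factor `exp (t² M² / 8)`. After `n - 1` steps only
`D_n` is left, whose mean is `n ∫ ψ dμ_φ`, and a last application of Hoeffding's lemma shows that
`S_n ψ` is sub-Gaussian with variance proxy `n M² / 4`. Chernoff's bound concludes.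
-/

section Summability

theorem summable_exp_neg_of_mul_log_le {c : ℝ} (hc : 1 < c) {f : ℕ → ℝ}
    (hf : ∀ᶠ n : ℕ in atTop, c * Real.log n ≤ f n) : Summable fun n => Real.exp (-f n) := by
  have hpow : Summable fun n : ℕ => (n : ℝ) ^ (-c) := Real.summable_nat_rpow.2 (by linarith)
  refine summable_of_isBigO_nat hpow (Asymptotics.IsBigO.of_bound 1 ?_)
  filter_upwards [hf, eventually_gt_atTop 0] with n hn hn0
  rw [Real.norm_of_nonneg (Real.exp_pos _).le, Real.norm_of_nonneg (by positivity), one_mul,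
    Real.rpow_def_of_pos (by exact_mod_cast hn0)]
  exact Real.exp_le_exp.2 (by linarith)

theorem eventually_mul_le_mul_rpow {α : ℝ} (hα : 1 < α) (b : ℝ) {c : ℝ} (hc : 0 < c) :
    ∀ᶠ x : ℝ in atTop, b * x ≤ c * x ^ α := by
  filter_upwards [(tendsto_rpow_atTop (sub_pos.2 hα)).eventually_ge_atTop (b / c),
    eventually_gt_atTop 0] with x hx hx0
  have hsplit : x ^ α = x ^ (α - 1) * x := by rw [← Real.rpow_add_one hx0.ne', sub_add_cancel]
  rw [hsplit, ← mul_assoc, mul_comm c]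
  exact mul_le_mul_of_nonneg_right ((div_le_iff₀ hc).1 hx) hx0.le

theorem summable_rpow_log_rpow {θ₀ : ℝ} (h0 : 0 < θ₀) (h1 : θ₀ < 1) {α : ℝ} (hα : 1 < α) :
    Summable fun n : ℕ => θ₀ ^ (Real.log n ^ α) := by
  have hlog : Tendsto (fun n : ℕ => Real.log n) atTop atTop :=
    Real.tendsto_log_atTop.comp tendsto_natCast_atTop_atTop
  have hc : 0 < -Real.log θ₀ := neg_pos.2 (Real.log_neg h0 h1)
  refine (summable_exp_neg_of_mul_log_le one_lt_two
    (hlog.eventually (eventually_mul_le_mul_rpow hα 2 hc))).congr fun n => ?_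
  rw [Real.rpow_def_of_pos h0, neg_mul, neg_neg]

theorem summable_exp_neg_mul_rpow {c : ℝ} (hc : 0 < c) {α : ℝ} (hα : 0 < α) :
    Summable fun n : ℕ => Real.exp (-c * (n : ℝ) ^ α) := by
  have hlog : ∀ᶠ n : ℕ in atTop, 2 * Real.log n ≤ c * (n : ℝ) ^ α := by
    filter_upwards [tendsto_natCast_atTop_atTop.eventually
      ((isLittleO_log_rpow_atTop hα).bound (half_pos hc))] with n hn
    rw [Real.norm_of_nonneg (Real.rpow_nonneg n.cast_nonneg α)] at hn
    linarith [Real.le_norm_self (Real.log n)]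
  simpa only [neg_mul] using summable_exp_neg_of_mul_log_le one_lt_two hlog

theorem tsum_ne_top_of_le_ofReal_mul {W : ℕ → ℝ≥0∞} (h0 : W 0 ≠ ⊤) {F : ℕ → ℝ} (hF : Summable F)
    {B : ℝ} (h : ∀ n, 1 ≤ n → W n ≤ ENNReal.ofReal (B * F n)) : ∑' n, W n ≠ ⊤ := by
  have htail : Summable fun n => B * F (n + 1) := ((summable_nat_add_iff 1).2 hF).mul_left B
  rw [tsum_eq_zero_add' ENNReal.summable]
  exact ENNReal.add_ne_top.2 ⟨h0, ne_top_of_le_ne_top htail.tsum_ofReal_ne_top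
    (ENNReal.tsum_le_tsum fun n => h (n + 1) n.succ_pos)⟩

theorem tsum_ne_top_of_decay {θ : ℝ} (hθ0 : 0 < θ) (hθ1 : θ < 1) {W : ℕ → ℝ≥0∞} (h0 : W 0 ≠ ⊤)
    (hcases :
      (∃ B > (0 : ℝ), ∀ n : ℕ, W n ≤ ENNReal.ofReal (B * θ ^ n)) ∨
      (∃ α > (1 : ℝ), ∃ B > (0 : ℝ), ∀ n : ℕ, 1 ≤ n →
        W n ≤ ENNReal.ofReal (B * (n : ℝ) ^ (-α))) ∨
      (∃ θ₀ : ℝ, 0 < θ₀ ∧ θ₀ < 1 ∧ ∃ α > (1 : ℝ), ∃ B > (0 : ℝ), ∀ n : ℕ, 1 ≤ n →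
        W n ≤ ENNReal.ofReal (B * θ₀ ^ (Real.log n ^ α))) ∨
      (∃ c > (0 : ℝ), ∃ α : ℝ, 0 < α ∧ α < 1 ∧ ∃ B > (0 : ℝ), ∀ n : ℕ,
        W n ≤ ENNReal.ofReal (B * Real.exp (-c * (n : ℝ) ^ α)))) :
    ∑' n, W n ≠ ⊤ := by
  rcases hcases with ⟨B, -, h⟩ | ⟨α, hα, B, -, h⟩ | ⟨θ₀, hθ₀, hθ₀', α, hα, B, -, h⟩ |
    ⟨c, hc, α, hα, -, B, -, h⟩
  · exact tsum_ne_top_of_le_ofReal_mul h0 (summable_geometric_of_lt_one hθ0.le hθ1)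
      fun n _ => h n
  · exact tsum_ne_top_of_le_ofReal_mul h0 (Real.summable_nat_rpow.2 (neg_lt_neg hα)) h
  · exact tsum_ne_top_of_le_ofReal_mul h0 (summable_rpow_log_rpow hθ₀ hθ₀' hα) h
  · exact tsum_ne_top_of_le_ofReal_mul h0 (summable_exp_neg_mul_rpow hc hα) fun n _ => h n

end Summability

section Hoeffding

open ProbabilityTheory

theorem mgf_le_of_abs_sub_le {X : Type*} [MeasurableSpace X] {μ : Measure X}
    [IsProbabilityMeasure μ] {f : X → ℝ} (hf : AEMeasurable f μ) {M : ℝ}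
    (hM : ∀ x y, |f x - f y| ≤ M) (t : ℝ) :
    mgf f μ t ≤ Real.exp (t * ∫ x, f x ∂μ + (t * M) ^ 2 / 8) := by
  obtain ⟨x₀⟩ := nonempty_of_isProbabilityMeasure μ
  have : Nonempty X := ⟨x₀⟩
  have hlower : ∀ x y, f x - M ≤ f y := fun x y => by linarith [(abs_le.1 (hM x y)).2]
  have hbdd : BddBelow (Set.range f) := ⟨f x₀ - M, Set.forall_mem_range.2 (hlower x₀)⟩
  have hIcc : ∀ x, f x ∈ Set.Icc (⨅ y, f y) ((⨅ y, f y) + M) := fun x =>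
    ⟨ciInf_le hbdd x, by linarith [le_ciInf (hlower x)]⟩
  have hmgf := (hasSubgaussianMGF_of_mem_Icc hf (Eventually.of_forall hIcc)).mgf_le t
  simp only [sub_eq_add_neg, mgf_add_const, mul_neg] at hmgf
  rw [Real.exp_neg, ← div_eq_mul_inv, div_le_iff₀ (Real.exp_pos _), ← Real.exp_add] at hmgf
  refine hmgf.trans_eq (congrArg Real.exp ?_)
  simp only [add_neg_cancel_comm, NNReal.coe_pow, NNReal.coe_div, coe_nnnorm, Real.norm_eq_abs,
    NNReal.coe_ofNat, div_pow, sq_abs]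
  ring

theorem sum_mul_exp_le {ι : Type*} [Fintype ι] {w : ι → ℝ} (hw0 : ∀ i, 0 ≤ w i)
    (hw1 : ∑ i, w i = 1) {f : ι → ℝ} {M : ℝ} (hM : ∀ i j, |f i - f j| ≤ M) (t : ℝ) :
    ∑ i, w i * Real.exp (t * f i) ≤ Real.exp (t * ∑ i, w i * f i + (t * M) ^ 2 / 8) := by
  let _ : MeasurableSpace ι := ⊤
  have hsum : ∑ i, ENNReal.ofReal (w i) = 1 := by
    rw [← ENNReal.ofReal_sum_of_nonneg fun i _ => hw0 i, hw1, ENNReal.ofReal_one]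
  have hint : ∀ u : ι → ℝ, ∫ i, u i ∂(PMF.ofFintype _ hsum).toMeasure = ∑ i, w i * u i := by
    intro u
    simp only [PMF.integral_eq_sum, PMF.ofFintype_apply, ENNReal.toReal_ofReal (hw0 _), smul_eq_mul]
  have hmgf := mgf_le_of_abs_sub_le (μ := (PMF.ofFintype _ hsum).toMeasure)
    measurable_from_top.aemeasurable hM t
  rwa [mgf, hint, hint] at hmgf

end Hoeffding

section Shift

variable {A : Type*}

theorem birk_succ (f : (ℕ → A) → ℝ) (n : ℕ) (x : ℕ → A) :
    birk f (n + 1) x = f x + birk f n (shift x) := by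
  rw [birk, Finset.sum_range_succ', add_comm]
  rfl

theorem wcat_elim0 (w : Fin 0 → A) (x : ℕ → A) : wcat w x = x := by
  funext k
  simp [wcat]

theorem wcat_cons {n : ℕ} (a : A) (w : Fin n → A) (x : ℕ → A) :
    wcat (Fin.cons a w : Fin (n + 1) → A) x = cons a (wcat w x) := by
  funext k
  cases k with
  | zero => simp [wcat, cons]
  | succ k =>
    by_cases hk : k < n
    · simp [wcat, cons, hk, Fin.cons, Fin.cases, Fin.induction, Fin.induction.go]
    · simp [wcat, cons, hk]

theorem wcat_eq_of_lt {n : ℕ} (w : Fin n → A) (x y : ℕ → A) :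
    ∀ i < n, wcat w x i = wcat w y i := fun i hi => by simp only [wcat, dif_pos hi]

theorem cons_eq_of_lt_succ (a : A) {x y : ℕ → A} {p : ℕ} (hxy : ∀ i < p, x i = y i) :
    ∀ i < p + 1, cons a x i = cons a y i
  | 0, _ => rfl
  | i + 1, hi => hxy i (Nat.lt_of_succ_lt_succ hi)

theorem transfer_comp_shift_mul [Fintype A] (φ u f : (ℕ → A) → ℝ) (x : ℕ → A) :
    transfer φ (fun y => u (shift y) * f y) x = u x * transfer φ f x := by
  simp only [transfer, Finset.mul_sum, mul_left_comm (u x)]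
  rfl

theorem iterate_transfer_apply [Fintype A] (φ f : (ℕ → A) → ℝ) (n : ℕ) (x : ℕ → A) :
    (transfer φ)^[n] f x =
      ∑ w : Fin n → A, Real.exp (birk φ n (wcat w x)) * f (wcat w x) := by
  induction n generalizing f with
  | zero => simp [birk, wcat_elim0]
  | succ n ih =>
    rw [Function.iterate_succ_apply, ih,
      ← (Fin.consEquiv fun _ : Fin (n + 1) => A).sum_comp, Fintype.sum_prod_type_right]
    refine Finset.sum_congr rfl fun w _ => ?_
    rw [transfer, Finset.mul_sum]
    refine Finset.sum_congr rfl fun a _ => ?_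
    change _ = Real.exp (birk φ (n + 1) (wcat (Fin.cons a w) x)) * f (wcat (Fin.cons a w) x)
    rw [wcat_cons, birk_succ, add_comm, Real.exp_add, mul_assoc]
    rfl

variable [TopologicalSpace A]

theorem continuous_shift : Continuous (shift : (ℕ → A) → ℕ → A) :=
  continuous_pi fun k => continuous_apply (k + 1)

theorem continuous_cons (a : A) : Continuous (cons a) :=
  continuous_pi fun k => by
    cases k with
    | zero => exact continuous_const
    | succ k => exact continuous_apply k

theorem continuous_birk {f : (ℕ → A) → ℝ} (hf : Continuous f) (n : ℕ) : Continuous (birk f n) :=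
  continuous_finsetSum _ fun i _ => hf.comp (continuous_shift.iterate i)

theorem continuous_transfer [Fintype A] {φ f : (ℕ → A) → ℝ} (hφ : Continuous φ)
    (hf : Continuous f) : Continuous (transfer φ f) :=
  continuous_finsetSum _ fun a _ =>
    (hφ.comp (continuous_cons a)).rexp.mul (hf.comp (continuous_cons a))

theorem exists_forall_abs_sub_lt [Finite A] [DiscreteTopology A] {f : (ℕ → A) → ℝ}
    (hf : Continuous f) {ε : ℝ} (hε : 0 < ε) :
    ∃ n : ℕ, ∀ x y : ℕ → A, (∀ i < n, x i = y i) → |f x - f y| < ε := by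
  let _ : MetricSpace (ℕ → A) := PiNat.metricSpace
  obtain ⟨δ, hδ, hfδ⟩ := Metric.uniformContinuous_iff.1
    (CompactSpace.uniformContinuous_of_continuous hf) ε hε
  obtain ⟨n, hn⟩ := exists_pow_lt_of_lt_one hδ one_half_lt_one
  exact ⟨n, fun x y hxy => hfδ ((PiNat.mem_cylinder_iff_dist_le.1 hxy).trans_lt hn)⟩

end Shift

section Coupling

theorem sum_mul_sub_sum_mul_le {ι : Type*} [Fintype ι] {p q u v : ι → ℝ} {r b B : ℝ}
    (hp : ∑ i, p i = 1) (hq : ∑ i, q i = 1) (hq0 : ∀ i, 0 ≤ q i) (hr0 : 0 ≤ r)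
    (hr : ∀ i, r * q i ≤ p i) (hb : ∀ i, u i - v i ≤ b) (hB : ∀ i j, u i - v j ≤ B) :
    ∑ i, p i * u i - ∑ i, q i * v i ≤ (1 - r) * B + r * b := by
  have hweighted : ∀ {f : ι → ℝ} {c : ℝ}, (∀ i, f i ≤ c) → ∑ i, q i * f i ≤ c := fun hf =>
    (Finset.sum_le_sum fun i _ => mul_le_mul_of_nonneg_left (hf i) (hq0 i)).trans_eq
      (by rw [← Finset.sum_mul, hq, one_mul])
  set V := ∑ i, q i * v i with hV
  have hexcess : ∀ i, u i - V ≤ B := fun i => by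
    have := hweighted (hB i)
    simpa only [mul_sub, Finset.sum_sub_distrib, ← Finset.sum_mul, hq, one_mul] using this
  calc ∑ i, p i * u i - V
      = ∑ i, (p i - r * q i) * (u i - V) + r * ∑ i, q i * (u i - v i) := by
        simp only [mul_sub, sub_mul, Finset.sum_sub_distrib, ← Finset.sum_mul, mul_assoc,
          ← Finset.mul_sum, hp, hq, ← hV]
        ring
    _ ≤ ∑ i, (p i - r * q i) * B + r * b :=
        add_le_add (Finset.sum_le_sum fun i _ =>
            mul_le_mul_of_nonneg_left (hexcess i) (sub_nonneg.2 (hr i)))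
          (mul_le_mul_of_nonneg_left (hweighted hb) hr0)
    _ = (1 - r) * B + r * b := by
        rw [← Finset.sum_mul, Finset.sum_sub_distrib, ← Finset.mul_sum, hp, hq, mul_one]

variable {A : Type*} [Fintype A]

theorem abs_transfer_sub_le {G f : (ℕ → A) → ℝ} (hG : ∀ x, ∑ a, Real.exp (G (cons a x)) = 1)
    {x y : ℕ → A} {δ b B : ℝ} (hδ : ∀ a, |G (cons a x) - G (cons a y)| ≤ δ)
    (hb : ∀ a, |f (cons a x) - f (cons a y)| ≤ b) (hB : ∀ x y, |f x - f y| ≤ B) :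
    |transfer G f x - transfer G f y| ≤ (1 - Real.exp (-δ)) * B + Real.exp (-δ) * b := by
  have key : ∀ {x y : ℕ → A}, (∀ a, |G (cons a x) - G (cons a y)| ≤ δ) →
      (∀ a, |f (cons a x) - f (cons a y)| ≤ b) →
      transfer G f x - transfer G f y ≤ (1 - Real.exp (-δ)) * B + Real.exp (-δ) * b :=
    fun {x y} hδ hb => sum_mul_sub_sum_mul_le (hG x) (hG y) (fun a => (Real.exp_pos _).le)
      (Real.exp_pos _).le
      (fun a => by
        rw [← Real.exp_add]
        exact Real.exp_le_exp.2 (by linarith [(abs_le.1 (hδ a)).1]))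
      (fun a => (abs_le.1 (hb a)).2) fun a c => (abs_le.1 (hB _ _)).2
  exact abs_sub_le_iff.2 ⟨key hδ hb,
    key (fun a => abs_sub_comm (G _) _ ▸ hδ a) fun a => abs_sub_comm (f _) _ ▸ hb a⟩

end Coupling

section NeumannSum

variable {A : Type*}

/-- `w p` bounds the variation `var_p f`. Stated with real numbers, it is the form of
`evar f p ≤ w p` in which variations enter the estimates. -/
def HasVarBound (f : (ℕ → A) → ℝ) (w : ℕ → ℝ) : Prop :=
  ∀ p x y, (∀ i < p, x i = y i) → |f x - f y| ≤ w p

theorem HasVarBound.abs_sub_le {f : (ℕ → A) → ℝ} {w : ℕ → ℝ} (hf : HasVarBound f w)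
    (x y : ℕ → A) : |f x - f y| ≤ w 0 :=
  hf 0 x y fun i hi => absurd hi i.not_lt_zero

variable [Fintype A] {G ψ : (ℕ → A) → ℝ}

/-- The partial sum `∑_{i<k} (P_G)^i ψ` of the Neumann series of the transfer operator. When `P_G`
averages over preimages, it corrects `ψ` to a martingale difference up to the last term. -/
def neumannSum (G ψ : (ℕ → A) → ℝ) : ℕ → (ℕ → A) → ℝ
  | 0 => 0
  | k + 1 => fun x => ψ x + transfer G (neumannSum G ψ k) x

theorem continuous_neumannSum [TopologicalSpace A] (hG : Continuous G) (hψ : Continuous ψ) :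
    ∀ k, Continuous (neumannSum G ψ k)
  | 0 => continuous_const
  | k + 1 => hψ.add (continuous_transfer hG (continuous_neumannSum hG hψ k))

theorem hasVarBound_neumannSum (hG : ∀ x, ∑ a, Real.exp (G (cons a x)) = 1) {δ a β : ℕ → ℝ}
    (hδ : ∀ c, HasVarBound (fun x => G (cons c x)) δ) (hψ : HasVarBound ψ a) (hβ : ∀ p, 0 ≤ β p)
    (hstep : ∀ p, a p + ((1 - Real.exp (-δ p)) * β 0 + Real.exp (-δ p) * β (p + 1)) ≤ β p) :
    ∀ k, HasVarBound (neumannSum G ψ k) β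
  | 0 => fun p x y _ => by simpa only [neumannSum, Pi.zero_apply, sub_zero, abs_zero] using hβ p
  | k + 1 => fun p x y hxy => by
    have ih := hasVarBound_neumannSum hG hδ hψ hβ hstep k
    have htransfer := abs_transfer_sub_le hG (fun c => hδ c p x y hxy)
      (fun c => ih (p + 1) _ _ (cons_eq_of_lt_succ c hxy)) ih.abs_sub_le
    calc |neumannSum G ψ (k + 1) x - neumannSum G ψ (k + 1) y|
        = |(ψ x - ψ y) +
            (transfer G (neumannSum G ψ k) x - transfer G (neumannSum G ψ k) y)| := by
          simp only [neumannSum, add_sub_add_comm]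
      _ ≤ _ := abs_add_le _ _
      _ ≤ _ := (add_le_add (hψ p x y hxy) htransfer).trans (hstep p)

theorem abs_neumannSum_sub_le (hG : ∀ x, ∑ a, Real.exp (G (cons a x)) = 1) {δ a : ℕ → ℝ}
    (hδ : ∀ c, HasVarBound (fun x => G (cons c x)) δ) (hψ : HasVarBound ψ a)
    (hδ0 : ∀ p, 0 ≤ δ p) (ha0 : ∀ p, 0 ≤ a p) (hδs : Summable δ) (has : Summable a) (k : ℕ)
    (x y : ℕ → A) :
    |neumannSum G ψ k x - neumannSum G ψ k y| ≤ Real.exp (∑' p, δ p) * ∑' p, a p := by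
  -- For `γ p = β 0 - β p` the recursion required of `β` is `γ p + a p ≤ exp (-δ p) * γ (p + 1)`.
  let γ : ℕ → ℝ := fun p => Real.exp (∑ i ∈ Finset.range p, δ i) * ∑ i ∈ Finset.range p, a i
  have hγ : ∀ p, γ p + a p ≤ Real.exp (-δ p) * γ (p + 1) := fun p => by
    have hexp : 1 ≤ Real.exp (∑ i ∈ Finset.range p, δ i) :=
      Real.one_le_exp (Finset.sum_nonneg fun i _ => hδ0 i)
    have hshift : Real.exp (-δ p) * γ (p + 1) =
        Real.exp (∑ i ∈ Finset.range p, δ i) * (∑ i ∈ Finset.range p, a i + a p) := by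
      simp only [γ, Finset.sum_range_succ]
      rw [← mul_assoc, ← Real.exp_add, neg_add_cancel_comm_assoc]
    rw [hshift, mul_add]
    exact add_le_add_right (le_mul_of_one_le_left (ha0 p) hexp) _
  have hγ_le : ∀ p, γ p ≤ Real.exp (∑' p, δ p) * ∑' p, a p := fun p =>
    mul_le_mul (Real.exp_le_exp.2 (hδs.sum_le_tsum _ fun i _ => hδ0 i))
      (has.sum_le_tsum _ fun i _ => ha0 i) (Finset.sum_nonneg fun i _ => ha0 i) (Real.exp_pos _).le
  have hγ0 : γ 0 = 0 := by simp only [γ, Finset.range_zero, Finset.sum_empty, mul_zero]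
  have hvar := hasVarBound_neumannSum hG hδ hψ
    (β := fun p => Real.exp (∑' p, δ p) * ∑' p, a p - γ p) (fun p => sub_nonneg.2 (hγ_le p))
    (fun p => by rw [hγ0]; linarith [hγ p]) k
  simpa only [hγ0, sub_zero] using hvar.abs_sub_le x y

end NeumannSum

section GMeasure

open ProbabilityTheory

variable {A : Type*} [Fintype A]

theorem transfer_exp_mul_le {G f : (ℕ → A) → ℝ} (hG : ∀ x, ∑ a, Real.exp (G (cons a x)) = 1)
    {M : ℝ} (hM : ∀ x y, |f x - f y| ≤ M) (t : ℝ) (x : ℕ → A) :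
    transfer G (fun y => Real.exp (t * f y)) x ≤
      Real.exp (t * transfer G f x + (t * M) ^ 2 / 8) :=
  sum_mul_exp_le (fun _ => (Real.exp_pos _).le) (hG x) (fun _ _ => hM _ _) t

variable [MeasurableSpace A] [TopologicalSpace A]

/-- `μ` is a g-measure for the g-function `exp ∘ G`. Integrability of continuous functions is a
field because the σ-algebra on `A` is arbitrary. -/
structure IsGMeasure (G : (ℕ → A) → ℝ) (μ : Measure (ℕ → A)) : Prop where
  sum_exp : ∀ x, ∑ a, Real.exp (G (cons a x)) = 1
  integrable : ∀ f : (ℕ → A) → ℝ, Continuous f → Integrable f μ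
  integral_transfer : ∀ f : (ℕ → A) → ℝ, Continuous f → ∫ x, transfer G f x ∂μ = ∫ x, f x ∂μ

namespace IsGMeasure

variable {G ψ : (ℕ → A) → ℝ} {μ : Measure (ℕ → A)}

theorem integral_neumannSum (hμ : IsGMeasure G μ) (hG : Continuous G) (hψ : Continuous ψ) (k : ℕ) :
    ∫ x, neumannSum G ψ k x ∂μ = k * ∫ x, ψ x ∂μ := by
  induction k with
  | zero => simp only [neumannSum, Pi.zero_apply, integral_zero, Nat.cast_zero, zero_mul]
  | succ k ih =>
    have hk := continuous_neumannSum hG hψ k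
    simp only [neumannSum]
    rw [integral_add (hμ.integrable _ hψ) (hμ.integrable _ (continuous_transfer hG hk)),
      hμ.integral_transfer _ hk, ih]
    push_cast
    ring

theorem integral_exp_birk_shift_add_neumannSum_le (hμ : IsGMeasure G μ) (hG : Continuous G)
    (hψ : Continuous ψ) {M : ℝ}
    (hM : ∀ k x y, |neumannSum G ψ k x - neumannSum G ψ k y| ≤ M) (t : ℝ) (m k : ℕ) :
    ∫ x, Real.exp (t * (birk ψ m (shift x) + neumannSum G ψ k x)) ∂μ ≤
      Real.exp (m * ((t * M) ^ 2 / 8)) * ∫ x, Real.exp (t * neumannSum G ψ (k + m) x) ∂μ := by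
  have hcont : ∀ m k, Continuous fun x =>
      Real.exp (t * (birk ψ m (shift x) + neumannSum G ψ k x)) := fun m k =>
    (continuous_const.mul (((continuous_birk hψ m).comp continuous_shift).add
      (continuous_neumannSum hG hψ k))).rexp
  induction m generalizing k with
  | zero => simp [birk]
  | succ m ih =>
    have hpointwise : ∀ x,
        transfer G (fun y => Real.exp (t * (birk ψ (m + 1) (shift y) + neumannSum G ψ k y))) x ≤
          Real.exp ((t * M) ^ 2 / 8) *
            Real.exp (t * (birk ψ m (shift x) + neumannSum G ψ (k + 1) x)) := fun x => by
      simp only [mul_add t, Real.exp_add]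
      rw [transfer_comp_shift_mul G (fun y => Real.exp (t * birk ψ (m + 1) y))]
      refine (mul_le_mul_of_nonneg_left (transfer_exp_mul_le hμ.sum_exp (hM k) t x)
        (Real.exp_pos _).le).trans_eq ?_
      simp only [birk_succ, neumannSum, ← Real.exp_add]
      ring_nf
    calc ∫ x, Real.exp (t * (birk ψ (m + 1) (shift x) + neumannSum G ψ k x)) ∂μ
        = ∫ x, transfer G
            (fun y => Real.exp (t * (birk ψ (m + 1) (shift y) + neumannSum G ψ k y))) x ∂μ :=
          (hμ.integral_transfer _ (hcont _ _)).symm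
      _ ≤ ∫ x, Real.exp ((t * M) ^ 2 / 8) *
            Real.exp (t * (birk ψ m (shift x) + neumannSum G ψ (k + 1) x)) ∂μ :=
          integral_mono (hμ.integrable _ (continuous_transfer hG (hcont _ _)))
            (hμ.integrable _ (continuous_const.mul (hcont _ _))) hpointwise
      _ ≤ Real.exp ((t * M) ^ 2 / 8) * (Real.exp (m * ((t * M) ^ 2 / 8)) *
            ∫ x, Real.exp (t * neumannSum G ψ (k + 1 + m) x) ∂μ) := by
          rw [integral_const_mul]
          exact mul_le_mul_of_nonneg_left (ih (k + 1)) (Real.exp_pos _).le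
      _ = _ := by
          rw [← mul_assoc, ← Real.exp_add, add_right_comm, add_assoc k, Nat.cast_succ, add_one_mul,
            add_comm (_ * _)]

theorem mgf_birk_le [IsProbabilityMeasure μ] (hμ : IsGMeasure G μ) (hG : Continuous G)
    (hψ : Continuous ψ) {M : ℝ}
    (hM : ∀ k x y, |neumannSum G ψ k x - neumannSum G ψ k y| ≤ M) (n : ℕ) (t : ℝ) :
    mgf (birk ψ n) μ t ≤ Real.exp (t * (n * ∫ x, ψ x ∂μ) + n * ((t * M) ^ 2 / 8)) := by
  obtain _ | m := n
  · simp [mgf, birk]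
  have hone : neumannSum G ψ 1 = ψ := by
    funext x
    simp [neumannSum, transfer]
  have hbirk := integral_exp_birk_shift_add_neumannSum_le hμ hG hψ hM t m 1
  simp only [hone, add_comm (birk ψ m _), ← birk_succ, add_comm 1 m] at hbirk
  have hlast := mgf_le_of_abs_sub_le
    (hμ.integrable _ (continuous_neumannSum hG hψ (m + 1))).aemeasurable (hM (m + 1)) t
  rw [integral_neumannSum hμ hG hψ] at hlast
  refine (hbirk.trans (mul_le_mul_of_nonneg_left hlast (Real.exp_pos _).le)).trans_eq ?_
  rw [← Real.exp_add]
  push_cast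
  ring_nf

theorem hasSubgaussianMGF_birk [IsProbabilityMeasure μ] (hμ : IsGMeasure G μ) (hG : Continuous G)
    (hψ : Continuous ψ) {M : ℝ≥0}
    (hM : ∀ k x y, |neumannSum G ψ k x - neumannSum G ψ k y| ≤ M) (n : ℕ) :
    HasSubgaussianMGF (fun x => birk ψ n x - n * ∫ y, ψ y ∂μ) (n * (M / 2) ^ 2) μ where
  integrable_exp_mul t :=
    hμ.integrable _ (continuous_const.mul ((continuous_birk hψ n).sub continuous_const)).rexp
  mgf_le t := by
    simp only [sub_eq_add_neg, mgf_add_const]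
    refine (mul_le_mul_of_nonneg_right (mgf_birk_le hμ hG hψ hM n t)
      (Real.exp_pos _).le).trans_eq ?_
    rw [← Real.exp_add]
    push_cast
    ring_nf

theorem measure_birk_ge_le [IsProbabilityMeasure μ] (hμ : IsGMeasure G μ) (hG : Continuous G)
    (hψ : Continuous ψ) {M : ℝ≥0}
    (hM : ∀ k x y, |neumannSum G ψ k x - neumannSum G ψ k y| ≤ M) {u : ℝ} (hu : 0 ≤ u) {n : ℕ}
    (hn : 1 ≤ n) :
    μ {x | 1 / (n : ℝ) * birk ψ n x - ∫ y, ψ y ∂μ ≥ u} ≤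
      ENNReal.ofReal (Real.exp (-(2 * n * u ^ 2) / M ^ 2)) := by
  have hn0 : (0 : ℝ) < n := by exact_mod_cast hn
  have hset : {x | 1 / (n : ℝ) * birk ψ n x - ∫ y, ψ y ∂μ ≥ u} =
      {x | n * u ≤ birk ψ n x - n * ∫ y, ψ y ∂μ} := by
    ext x
    rw [Set.mem_ofPred_eq, Set.mem_ofPred_eq, ge_iff_le, ← mul_le_mul_iff_right₀ hn0, mul_sub,
      ← mul_assoc, mul_one_div_cancel hn0.ne', one_mul]
  rw [hset, ENNReal.le_ofReal_iff_toReal_le (measure_ne_top μ _) (Real.exp_pos _).le]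
  have hchernoff := (hμ.hasSubgaussianMGF_birk hG hψ hM n).measure_ge_le (mul_nonneg hn0.le hu)
  refine hchernoff.trans_eq (congrArg Real.exp ?_)
  push_cast
  field_simp

end IsGMeasure

end GMeasure

section Variations

variable {A : Type*} {φ ψ : (ℕ → A) → ℝ}

theorem Wp_zero_le (φ : (ℕ → A) → ℝ) : Wp φ 0 ≤ ⨆ (x : ℕ → A) (y : ℕ → A), Wpair φ x y :=
  iSup₂_mono fun _ _ => iSup_le fun _ => le_rfl

theorem Wp_antitone (φ : (ℕ → A) → ℝ) : Antitone (Wp φ) := fun _ _ hpq =>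
  iSup₂_mono fun _ _ => iSup_const_mono fun hxy i hi => hxy i (hi.trans_le hpq)

theorem ofReal_abs_birk_wcat_sub_le {p : ℕ} {x y : ℕ → A} (hxy : ∀ i < p, x i = y i) {n : ℕ}
    (w : Fin n → A) :
    ENNReal.ofReal |birk φ n (wcat w x) - birk φ n (wcat w y)| ≤ Wp φ p :=
  (le_iSup₂ (f := fun n (w : Fin n → A) =>
    ENNReal.ofReal |birk φ n (wcat w x) - birk φ n (wcat w y)|) n w).trans
    (le_iSup₂_of_le x y (le_iSup_of_le hxy le_rfl))

theorem abs_birk_wcat_sub_le {p : ℕ} (hp : Wp φ p ≠ ⊤) {x y : ℕ → A} (hxy : ∀ i < p, x i = y i)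
    {n : ℕ} (w : Fin n → A) :
    |birk φ n (wcat w x) - birk φ n (wcat w y)| ≤ (Wp φ p).toReal :=
  (ENNReal.ofReal_le_iff_le_toReal hp).1 (ofReal_abs_birk_wcat_sub_le hxy w)

theorem hasVarBound_comp_cons (hW : ∀ p, Wp φ p ≠ ⊤) (a : A) :
    HasVarBound (fun x => φ (cons a x)) fun p => (Wp φ p).toReal := fun p x y hxy => by
  have hword : ∀ z, wcat (Fin.cons a Fin.elim0 : Fin 1 → A) z = cons a z := fun z => by
    rw [wcat_cons, wcat_elim0]
  have hbirk : ∀ z, birk φ 1 z = φ z := fun z => Finset.sum_range_one _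
  simpa only [hword, hbirk] using
    abs_birk_wcat_sub_le (hW p) hxy (Fin.cons a Fin.elim0 : Fin 1 → A)

theorem hasVarBound_of_eLip_ne_top (hW : ∀ p, Wp φ p ≠ ⊤) (hψ : eLip φ ψ ≠ ⊤) :
    HasVarBound ψ fun p => (eLip φ ψ).toReal * (Wp φ p).toReal := fun p x y hxy => by
  have hvar : ENNReal.ofReal |ψ x - ψ y| ≤ evar ψ p :=
    le_iSup₂_of_le x y (le_iSup_of_le hxy le_rfl)
  have hLip : evar ψ p ≤ eLip φ ψ * Wp φ p :=
    (ENNReal.div_le_iff_le_mul (Or.inr hψ) (Or.inl (hW p))).1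
      (le_iSup (fun p => evar ψ p / Wp φ p) p)
  simp only [← ENNReal.toReal_mul]
  exact (ENNReal.ofReal_le_iff_le_toReal (ENNReal.mul_ne_top hψ (hW p))).1 (hvar.trans hLip)

end Variations

section Normalization

variable {A : Type*} {φ h : (ℕ → A) → ℝ} {lam : ℝ}

/-- The normalization of `φ` by the eigenfunction `h` of `transfer φ` with eigenvalue `lam`: a
potential cohomologous to `φ - log lam` whose exponential is a g-function. -/
def normalizedPotential (φ h : (ℕ → A) → ℝ) (lam : ℝ) (x : ℕ → A) : ℝ :=
  φ x + Real.log (h x) - Real.log (h (shift x)) - Real.log lam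

theorem continuous_normalizedPotential [TopologicalSpace A] (hφ : Continuous φ)
    (hh : Continuous h) (hhpos : ∀ x, 0 < h x) : Continuous (normalizedPotential φ h lam) := by
  have hlog : Continuous fun x => Real.log (h x) := hh.log fun x => (hhpos x).ne'
  exact ((hφ.add hlog).sub (hlog.comp continuous_shift)).sub continuous_const

theorem exp_normalizedPotential_cons (hlam : 0 < lam) (hhpos : ∀ x, 0 < h x) (a : A) (x : ℕ → A) :
    Real.exp (normalizedPotential φ h lam (cons a x)) =
      Real.exp (φ (cons a x)) * h (cons a x) / (lam * h x) := by
  change Real.exp (φ (cons a x) + Real.log (h (cons a x)) - Real.log (h x) - Real.log lam) = _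
  rw [sub_sub, add_comm (Real.log (h x)), Real.exp_sub, Real.exp_add, Real.exp_add,
    Real.exp_log (hhpos _), Real.exp_log (hhpos _), Real.exp_log hlam]

variable [Fintype A]

theorem transfer_normalizedPotential (hlam : 0 < lam) (hhpos : ∀ x, 0 < h x) (f : (ℕ → A) → ℝ)
    (x : ℕ → A) :
    transfer (normalizedPotential φ h lam) f x =
      transfer φ (fun y => h y * f y) x / (lam * h x) := by
  simp only [transfer, exp_normalizedPotential_cons hlam hhpos, Finset.sum_div, div_mul_eq_mul_div,
    mul_assoc]

theorem sum_exp_normalizedPotential (hlam : 0 < lam) (hhpos : ∀ x, 0 < h x)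
    (heig : ∀ x, transfer φ h x = lam * h x) (x : ℕ → A) :
    ∑ a, Real.exp (normalizedPotential φ h lam (cons a x)) = 1 := by
  simp only [exp_normalizedPotential_cons hlam hhpos, ← Finset.sum_div]
  rw [← heig x]
  exact div_self ((heig x).trans_ne (mul_pos hlam (hhpos x)).ne')

theorem iterate_transfer_eigenfunction (heig : ∀ x, transfer φ h x = lam * h x) (n : ℕ)
    (x : ℕ → A) : (transfer φ)^[n] h x = lam ^ n * h x := by
  induction n generalizing x with
  | zero => rw [Function.iterate_zero_apply, pow_zero, one_mul]
  | succ n ih =>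
    rw [Function.iterate_succ_apply', funext ih, pow_succ, mul_assoc, ← heig]
    exact transfer_comp_shift_mul φ (fun _ => lam ^ n) h x

variable [TopologicalSpace A] [DiscreteTopology A]

theorem hasVarBound_log_eigenfunction (hW : ∀ p, Wp φ p ≠ ⊤) (hlam : 0 < lam)
    (hh : Continuous h) (hhpos : ∀ x, 0 < h x) (heig : ∀ x, transfer φ h x = lam * h x) :
    HasVarBound (fun x => Real.log (h x)) fun p => (Wp φ p).toReal := by
  have key : ∀ {p x y}, (∀ i < p, x i = y i) →
      Real.log (h x) - Real.log (h y) ≤ (Wp φ p).toReal := fun {p x y} hxy => by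
    refine le_of_forall_pos_le_add fun ε hε => ?_
    obtain ⟨n, hn⟩ := exists_forall_abs_sub_lt (hh.log fun x => (hhpos x).ne') hε
    have hword : ∀ w : Fin n → A, Real.exp (birk φ n (wcat w x)) * h (wcat w x) ≤
        Real.exp ((Wp φ p).toReal + ε) * (Real.exp (birk φ n (wcat w y)) * h (wcat w y)) := by
      intro w
      rw [← Real.exp_log (hhpos (wcat w x)), ← Real.exp_log (hhpos (wcat w y)), ← Real.exp_add,
        ← Real.exp_add, ← Real.exp_add]
      exact Real.exp_le_exp.2 (by
        linarith [(abs_le.1 (abs_birk_wcat_sub_le (hW p) hxy w)).2,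
          (abs_lt.1 (hn _ _ (wcat_eq_of_lt w x y))).2])
    have hle : lam ^ n * h x ≤ lam ^ n * (Real.exp ((Wp φ p).toReal + ε) * h y) := by
      rw [mul_left_comm, ← iterate_transfer_eigenfunction heig,
        ← iterate_transfer_eigenfunction heig, iterate_transfer_apply, iterate_transfer_apply,
        Finset.mul_sum]
      exact Finset.sum_le_sum fun w _ => hword w
    have hlog := Real.log_le_log (hhpos x) (le_of_mul_le_mul_left hle (pow_pos hlam n))
    rw [Real.log_mul (Real.exp_pos _).ne' (hhpos y).ne', Real.log_exp] at hlog
    linarith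
  exact fun p x y hxy => abs_sub_le_iff.2 ⟨key hxy, key fun i hi => (hxy i hi).symm⟩

theorem hasVarBound_normalizedPotential_comp_cons (hW : ∀ p, Wp φ p ≠ ⊤) (hlam : 0 < lam)
    (hh : Continuous h) (hhpos : ∀ x, 0 < h x) (heig : ∀ x, transfer φ h x = lam * h x) (a : A) :
    HasVarBound (fun x => normalizedPotential φ h lam (cons a x))
      fun p => 3 * (Wp φ p).toReal := fun p x y hxy => by
  have hlog := hasVarBound_log_eigenfunction hW hlam hh hhpos heig
  have hφ := abs_le.1 (hasVarBound_comp_cons hW a p x y hxy)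
  have hlog_cons := abs_le.1 ((hlog (p + 1) _ _ (cons_eq_of_lt_succ a hxy)).trans
    (ENNReal.toReal_mono (hW p) (Wp_antitone φ p.le_succ)))
  have hlog_tail := abs_le.1 (hlog p x y hxy)
  change |φ (cons a x) + Real.log (h (cons a x)) - Real.log (h x) - Real.log lam -
    (φ (cons a y) + Real.log (h (cons a y)) - Real.log (h y) - Real.log lam)| ≤ _
  exact abs_le.2 ⟨by linarith [hφ.1, hlog_cons.1, hlog_tail.2],
    by linarith [hφ.2, hlog_cons.2, hlog_tail.1]⟩

theorem abs_neumannSum_normalizedPotential_sub_le {ψ : (ℕ → A) → ℝ}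
    (hW : ∑' p, Wp φ p ≠ ⊤) (hlam : 0 < lam) (hh : Continuous h) (hhpos : ∀ x, 0 < h x)
    (heig : ∀ x, transfer φ h x = lam * h x) (hψ : eLip φ ψ ≠ ⊤) (k : ℕ) (x y : ℕ → A) :
    |neumannSum (normalizedPotential φ h lam) ψ k x -
        neumannSum (normalizedPotential φ h lam) ψ k y| ≤
      (eLip φ ψ).toReal * Real.exp (4 * ∑' p, (Wp φ p).toReal) := by
  have hWp := ENNReal.ne_top_of_tsum_ne_top hW
  have hsum : Summable fun p => (Wp φ p).toReal := ENNReal.summable_toReal hW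
  set S := ∑' p, (Wp φ p).toReal
  have hS : S ≤ Real.exp S := by linarith [Real.add_one_le_exp S]
  calc _ ≤ Real.exp (∑' p, 3 * (Wp φ p).toReal) * ∑' p, (eLip φ ψ).toReal * (Wp φ p).toReal :=
        abs_neumannSum_sub_le (sum_exp_normalizedPotential hlam hhpos heig)
          (hasVarBound_normalizedPotential_comp_cons hWp hlam hh hhpos heig)
          (hasVarBound_of_eLip_ne_top hWp hψ) (fun p => by positivity) (fun p => by positivity)
          (hsum.mul_left _) (hsum.mul_left _) k x y
    _ = (eLip φ ψ).toReal * (Real.exp (3 * S) * S) := by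
        rw [tsum_mul_left, tsum_mul_left, mul_left_comm]
    _ ≤ (eLip φ ψ).toReal * (Real.exp (3 * S) * Real.exp S) := by gcongr
    _ = (eLip φ ψ).toReal * Real.exp (4 * S) := by
        rw [← Real.exp_add]
        ring_nf

end Normalization

section WithDensity

variable {X : Type*} [MeasurableSpace X] {μ : Measure X} {h f : X → ℝ}

theorem isProbabilityMeasure_withDensity_ofReal (hh : Integrable h μ) (hh0 : ∀ x, 0 ≤ h x)
    (hint : ∫ x, h x ∂μ = 1) :
    IsProbabilityMeasure (μ.withDensity fun x => ENNReal.ofReal (h x)) where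
  measure_univ := by
    rw [withDensity_apply _ .univ, Measure.restrict_univ,
      ← ofReal_integral_eq_lintegral_ofReal hh (Eventually.of_forall hh0), hint,
      ENNReal.ofReal_one]

theorem integrable_withDensity_ofReal_iff (hh : AEMeasurable h μ) (hh0 : ∀ x, 0 ≤ h x) :
    Integrable f (μ.withDensity fun x => ENNReal.ofReal (h x)) ↔
      Integrable (fun x => h x * f x) μ := by
  rw [integrable_withDensity_iff_integrable_smul₀' hh.ennreal_ofReal
    (Eventually.of_forall fun _ => ENNReal.ofReal_lt_top)]
  simp only [ENNReal.toReal_ofReal (hh0 _), smul_eq_mul]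

theorem integral_withDensity_ofReal (hh : AEMeasurable h μ) (hh0 : ∀ x, 0 ≤ h x) :
    ∫ x, f x ∂(μ.withDensity fun x => ENNReal.ofReal (h x)) = ∫ x, h x * f x ∂μ := by
  rw [integral_withDensity_eq_integral_toReal_smul₀ hh.ennreal_ofReal
    (Eventually.of_forall fun _ => ENNReal.ofReal_lt_top)]
  simp only [ENNReal.toReal_ofReal (hh0 _), smul_eq_mul]

end WithDensity

section Eigenmeasure

theorem integrable_of_isTopologicalBasis {X : Type*} [TopologicalSpace X] [CompactSpace X]
    [SecondCountableTopology X] [MeasurableSpace X] {μ : Measure X} [IsFiniteMeasure μ]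
    {B : Set (Set X)} (hB : TopologicalSpace.IsTopologicalBasis B)
    (hBμ : ∀ s ∈ B, NullMeasurableSet s μ) {f : X → ℝ} (hf : Continuous f) : Integrable f μ := by
  have hborel : borel X ≤ (inferInstance : MeasurableSpace (NullMeasurableSpace X μ)) := by
    rw [hB.borel_eq_generateFrom]
    exact MeasurableSpace.generateFrom_le hBμ
  have hmeas : Measurable fun x : NullMeasurableSpace X μ => f x := measurable_of_isOpen fun s hs =>
    hborel _ (MeasurableSpace.measurableSet_generateFrom (hs.preimage hf))
  have hae : AEMeasurable f μ := NullMeasurable.aemeasurable fun _ hs => hmeas hs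
  obtain ⟨C, hC⟩ := isCompact_univ.exists_bound_of_continuousOn hf.continuousOn
  exact .of_bound hae.aestronglyMeasurable C (Eventually.of_forall fun x => hC x trivial)

variable {A : Type*} {φ : (ℕ → A) → ℝ}

/-- The indicator of the cylinder `[z 0, …, z (n - 1)]` weighted by `exp (-S_n φ)`, so that each
application of the transfer operator deletes the first letter of the cylinder. -/
def cylinderTest (φ : (ℕ → A) → ℝ) (n : ℕ) (z : ℕ → A) : (ℕ → A) → ℝ :=
  (PiNat.cylinder z n).indicator fun x => Real.exp (-birk φ n x)

theorem cylinderTest_zero (z : ℕ → A) : cylinderTest φ 0 z = 1 := by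
  funext x
  simp [cylinderTest, birk]

theorem preimage_cylinderTest_compl_zero (φ : (ℕ → A) → ℝ) (n : ℕ) (z : ℕ → A) :
    cylinderTest φ n z ⁻¹' {0}ᶜ = PiNat.cylinder z n := by
  ext x
  simp [cylinderTest, Real.exp_ne_zero]

theorem cons_mem_cylinder_succ {n : ℕ} {z x : ℕ → A} {a : A} :
    cons a x ∈ PiNat.cylinder z (n + 1) ↔ a = z 0 ∧ x ∈ PiNat.cylinder (shift z) n := by
  rw [PiNat.mem_cylinder_iff, PiNat.mem_cylinder_iff, Nat.forall_lt_succ_left']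
  rfl

theorem transfer_cylinderTest_succ [Fintype A] (φ : (ℕ → A) → ℝ) (n : ℕ) (z : ℕ → A) :
    transfer φ (cylinderTest φ (n + 1) z) = cylinderTest φ n (shift z) := by
  classical
  funext x
  have hterm : ∀ a, Real.exp (φ (cons a x)) * cylinderTest φ (n + 1) z (cons a x) =
      if a = z 0 then cylinderTest φ n (shift z) x else 0 := fun a => by
    have hbirk : birk φ (n + 1) (cons a x) = φ (cons a x) + birk φ n x := birk_succ φ n _
    simp only [cylinderTest, Set.indicator_apply, cons_mem_cylinder_succ, ite_and, hbirk, neg_add,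
      mul_ite, mul_zero, ← Real.exp_add, add_neg_cancel_left]
  simp only [transfer, hterm, Finset.sum_ite_eq', Finset.mem_univ, if_true]

variable [TopologicalSpace A] [DiscreteTopology A]

theorem continuous_cylinderTest (hφ : Continuous φ) (n : ℕ) (z : ℕ → A) :
    Continuous (cylinderTest φ n z) := by
  have hclopen : IsClopen (PiNat.cylinder z n) := by
    refine ⟨?_, PiNat.isOpen_cylinder (fun _ => A) z n⟩
    rw [PiNat.cylinder_eq_pi]
    exact isClosed_set_pi fun _ _ => isClosed_discrete _
  exact (continuous_birk hφ n).neg.rexp.indicator (by simp [hclopen.frontier_eq])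

variable [Fintype A] [MeasurableSpace A] {ν : Measure (ℕ → A)} {lam : ℝ}

/-- `ν` is an eigenmeasure of the dual of `transfer φ`, with eigenvalue `lam`. Integrability of the
continuous functions is not part of the definition, although `A` carries an arbitrary σ-algebra. -/
def IsEigenmeasure (φ : (ℕ → A) → ℝ) (lam : ℝ) (ν : Measure (ℕ → A)) : Prop :=
  ∀ f : (ℕ → A) → ℝ, Continuous f → ∫ x, transfer φ f x ∂ν = lam * ∫ x, f x ∂ν

namespace IsEigenmeasure

variable [IsProbabilityMeasure ν]

theorem integral_cylinderTest_ne_zero (hν : IsEigenmeasure φ lam ν) (hφ : Continuous φ) (n : ℕ)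
    (z : ℕ → A) : ∫ x, cylinderTest φ n z x ∂ν ≠ 0 := by
  induction n generalizing z with
  | zero => simp [cylinderTest_zero]
  | succ n ih =>
    intro hzero
    refine ih (shift z) ?_
    rw [← transfer_cylinderTest_succ, hν _ (continuous_cylinderTest hφ _ z), hzero, mul_zero]

-- A function with nonzero integral is integrable, hence almost everywhere measurable.
theorem nullMeasurableSet_cylinder (hν : IsEigenmeasure φ lam ν) (hφ : Continuous φ) (n : ℕ)
    (z : ℕ → A) : NullMeasurableSet (PiNat.cylinder z n) ν := by
  have hint : Integrable (cylinderTest φ n z) ν :=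
    not_imp_comm.1 integral_undef (hν.integral_cylinderTest_ne_zero hφ n z)
  rw [← preimage_cylinderTest_compl_zero φ]
  exact hint.aemeasurable.nullMeasurable (measurableSet_singleton 0).compl

theorem integrable (hν : IsEigenmeasure φ lam ν) (hφ : Continuous φ) {f : (ℕ → A) → ℝ}
    (hf : Continuous f) : Integrable f ν :=
  integrable_of_isTopologicalBasis (PiNat.isTopologicalBasis_cylinders fun _ => A)
    (by rintro _ ⟨z, n, rfl⟩; exact hν.nullMeasurableSet_cylinder hφ n z) hf

theorem isGMeasure_withDensity {h : (ℕ → A) → ℝ} (hν : IsEigenmeasure φ lam ν)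
    (hφ : Continuous φ) (hlam : 0 < lam) (hh : Continuous h) (hhpos : ∀ x, 0 < h x)
    (heig : ∀ x, transfer φ h x = lam * h x) :
    IsGMeasure (normalizedPotential φ h lam) (ν.withDensity fun x => ENNReal.ofReal (h x)) where
  sum_exp := sum_exp_normalizedPotential hlam hhpos heig
  integrable f hf := by
    rw [integrable_withDensity_ofReal_iff (hν.integrable hφ hh).aemeasurable fun x => (hhpos x).le]
    exact hν.integrable hφ (hh.mul hf)
  integral_transfer f hf := by
    have hcancel : ∀ x, h x * transfer (normalizedPotential φ h lam) f x =
        lam⁻¹ * transfer φ (fun y => h y * f y) x := fun x => by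
      rw [transfer_normalizedPotential hlam hhpos]
      field_simp [(hhpos x).ne']
    have hhν := (hν.integrable hφ hh).aemeasurable
    rw [integral_withDensity_ofReal hhν fun x => (hhpos x).le,
      integral_withDensity_ofReal hhν fun x => (hhpos x).le]
    simp only [hcancel]
    rw [integral_const_mul, hν (fun y => h y * f y) (hh.mul hf), inv_mul_cancel_left₀ hlam.ne']

end IsEigenmeasure

end Eigenmeasure

theorem stmt4_general {A : Type*} [Fintype A] [MeasurableSpace A] [TopologicalSpace A]
    [DiscreteTopology A] (φ : (ℕ → A) → ℝ) (hφ : Continuous φ) (hW : ∑' p, Wp φ p ≠ ⊤)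
    (lam : ℝ) (hlam : 0 < lam) (h : (ℕ → A) → ℝ) (hh : Continuous h) (hhpos : ∀ x, 0 < h x)
    (ν : Measure (ℕ → A)) [IsProbabilityMeasure ν]
    (heig : ∀ x, transfer φ h x = lam * h x)
    (heig' : ∀ f : (ℕ → A) → ℝ, Continuous f → ∫ x, transfer φ f x ∂ν = lam * ∫ x, f x ∂ν)
    (hint : ∫ x, h x ∂ν = 1) :
    ∃ D > (0 : ℝ), ∀ ψ : (ℕ → A) → ℝ, Continuous ψ → eLip φ ψ ≠ ⊤ →
      ∀ u : ℝ, 0 < u → ∀ n : ℕ, 1 ≤ n →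
        (ν.withDensity fun x => ENNReal.ofReal (h x))
            {x : ℕ → A | (1 / (n : ℝ)) * birk ψ n x
              - (∫ y, ψ y ∂(ν.withDensity fun x => ENNReal.ofReal (h x))) ≥ u} ≤
          ENNReal.ofReal
            (Real.exp (-((n : ℝ) * u ^ 2) / (4 * D * ((eLip φ ψ).toReal) ^ 2))) := by
  have hν : IsEigenmeasure φ lam ν := heig'
  have hμ := hν.isGMeasure_withDensity hφ hlam hh hhpos heig
  have := isProbabilityMeasure_withDensity_ofReal (hν.integrable hφ hh) (fun x => (hhpos x).le)
    hint
  set E := Real.exp (4 * ∑' p, (Wp φ p).toReal)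
  refine ⟨E ^ 2 / 8, by positivity, fun ψ hψ hLip u hu n hn => ?_⟩
  have htail := hμ.measure_birk_ge_le (continuous_normalizedPotential hφ hh hhpos) hψ
    (M := .mk ((eLip φ ψ).toReal * E) (by positivity))
    (abs_neumannSum_normalizedPotential_sub_le hW hlam hh hhpos heig hLip) hu.le hn
  refine htail.trans_eq (congrArg (fun r => ENNReal.ofReal (Real.exp r)) ?_)
  rw [NNReal.coe_mk, mul_pow]
  field_simp
  norm_num

/-- Gaussian concentration for Birkhoff sums of `d_φ`-Lipschitz observables. -/
theorem stmt4 {A : Type*} [Fintype A] [MeasurableSpace A] [TopologicalSpace A]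
    [DiscreteTopology A] (hcard : 2 ≤ Fintype.card A)
    (θ : ℝ) (hθ0 : 0 < θ) (hθ1 : θ < 1)
    (φ : (ℕ → A) → ℝ) (hφ : Continuous φ) (hWalters : Walters φ)
    (hcases :
      (∃ B > (0 : ℝ), ∀ n : ℕ, Wp φ n ≤ ENNReal.ofReal (B * θ ^ n)) ∨
      (∃ α > (1 : ℝ), ∃ B > (0 : ℝ), ∀ n : ℕ, 1 ≤ n →
        Wp φ n ≤ ENNReal.ofReal (B * (n : ℝ) ^ (-α))) ∨
      (∃ θ₀ : ℝ, 0 < θ₀ ∧ θ₀ < 1 ∧ ∃ α > (1 : ℝ), ∃ B > (0 : ℝ), ∀ n : ℕ, 1 ≤ n →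
        Wp φ n ≤ ENNReal.ofReal (B * θ₀ ^ (Real.log n ^ α))) ∨
      (∃ c > (0 : ℝ), ∃ α : ℝ, 0 < α ∧ α < 1 ∧ ∃ B > (0 : ℝ), ∀ n : ℕ,
        Wp φ n ≤ ENNReal.ofReal (B * Real.exp (-c * (n : ℝ) ^ α))))
    -- the equilibrium state μ_φ = h·ν :
    (lam : ℝ) (hlam : 0 < lam) (h : (ℕ → A) → ℝ) (hh : Continuous h) (hhpos : ∀ x, 0 < h x)
    (ν : Measure (ℕ → A)) [IsProbabilityMeasure ν]
    (heig : ∀ x, transfer φ h x = lam * h x)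
    (heig' : ∀ f : (ℕ → A) → ℝ, Continuous f → ∫ x, transfer φ f x ∂ν = lam * ∫ x, f x ∂ν)
    (hint : ∫ x, h x ∂ν = 1) :
    ∃ D > (0 : ℝ), ∀ ψ : (ℕ → A) → ℝ, Continuous ψ → eLip φ ψ ≠ ⊤ →
      ∀ u : ℝ, 0 < u → ∀ n : ℕ, 1 ≤ n →
        (ν.withDensity fun x => ENNReal.ofReal (h x))
            {x : ℕ → A | (1 / (n : ℝ)) * birk ψ n x
              - (∫ y, ψ y ∂(ν.withDensity fun x => ENNReal.ofReal (h x))) ≥ u} ≤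
          ENNReal.ofReal
            (Real.exp (-((n : ℝ) * u ^ 2) / (4 * D * ((eLip φ ψ).toReal) ^ 2))) := by
  have hW0 : Wp φ 0 ≠ ⊤ := ne_top_of_le_ne_top hWalters.1 (Wp_zero_le φ)
  exact stmt4_general φ hφ (tsum_ne_top_of_decay hθ0 hθ1 hW0 hcases) lam hlam h hh hhpos ν heig
    heig' hint
end
end

section
/- Let μ be a T-invariant Borel probability measure on Ω satisfying GCB(C). Then for every u > 0 and every n ≥ 1: μ{x ∈ Ω : |d_K(𝓔_n(x), μ) − ∫ d_K(𝓔_n(y), μ) dμ(y)| ≥ u} ≤ 2 exp(−n u²/(4C)). -/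
open MeasureTheory Filter Topology
open scoped ENNReal NNReal BigOperators

noncomputable section

/-- The empirical measure `𝓔_n(x) = (1/n) Σ_{j<n} δ_{T^j x}`. -/
def empMeas {A : Type*} [MeasurableSpace A] (n : ℕ) (x : ℕ → A) : Measure (ℕ → A) :=
  ((n : ℝ≥0∞))⁻¹ • ∑ j ∈ Finset.range n, Measure.dirac (shift^[j] x)

/-- The Kantorovich distance w.r.t. `d_θ` between two measures on `Ω`. -/
def dKant {A : Type*} [MeasurableSpace A] (θ : ℝ) (ν₁ ν₂ : Measure (ℕ → A)) : ℝ :=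
  ⨆ f : {f : (ℕ → A) → ℝ // ∀ x y, |f x - f y| ≤ dtheta θ x y},
    (∫ x, f.1 x ∂ν₁) - ∫ x, f.1 x ∂ν₂

/-!
`GCB` says precisely that `K (x, Tx, …, Tⁿ⁻¹x)` minus its mean is sub-Gaussian with variance proxy
`2 C ∑ ℓ i ^ 2`. As a supremum of averages of `1`-Lipschitz functions, the Kantorovich distance
between `μ` and the uniform distribution on `n` points is separately Lipschitz with constants
`1 / n`, so its variance proxy is `2 C / n` and Chernoff's bound on both sides gives the theorem.

The σ-algebra on `A` is arbitrary, so `1`-Lipschitz functions need not be measurable, and the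
Bochner integral of such a function is `0`. If some function is measurable for exactly one of
`𝓔ₙ(x)` and `μ`, adding constants to it makes the supremum defining the distance infinite, i.e.
equal to `0` in `ℝ`. If there is no such function and `{x}` is not measurable, concentration of
symbol frequencies forces `𝓔ₙ(x) = μ`. Finally, by a zero–one law `{x}` is measurable for almost
every `x` or for almost no `x`. Hence either the distance vanishes almost everywhere, or all
`1`-Lipschitz functions are `μ`-measurable and almost every `𝓔ₙ(x)` integrates every function as
a plain average.
-/

open ProbabilityTheory

/-- The class over which the supremum in `dKant` runs: the functions that are `1`-Lipschitz
for `dtheta θ`. -/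
def OneLip {A : Type*} (θ : ℝ) (f : (ℕ → A) → ℝ) : Prop :=
  ∀ x y, |f x - f y| ≤ dtheta θ x y

/-- The orbit segment `(x, Tx, …, Tⁿ⁻¹x)`, i.e. the point of `Ωⁿ` at which `GCB` evaluates the
observable. -/
def shiftOrbit {A : Type*} (n : ℕ) (x : ℕ → A) : Fin n → ℕ → A :=
  fun i => shift^[(i : ℕ)] x

/-- All observables of the supremum in `dKant` are measurable, so that none of the Bochner
integrals against `μ` is a junk value. -/
def OneLipMeasurable {A : Type*} [MeasurableSpace A] (θ : ℝ) (μ : Measure (ℕ → A)) : Prop :=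
  ∀ f, OneLip θ f → AEStronglyMeasurable f μ

/-- The Kantorovich distance between the uniform distribution on the points `X 0, …, X (n - 1)`
and `μ`, with the integral against the former written as a sum so that it is meaningful
even when singletons are not measurable. -/
def sampleKant {A : Type*} [MeasurableSpace A] (θ : ℝ) (μ : Measure (ℕ → A)) {n : ℕ}
    (X : Fin n → ℕ → A) : ℝ :=
  ⨆ f : {f : (ℕ → A) → ℝ // OneLip θ f}, (n : ℝ)⁻¹ * ∑ i, f.1 (X i) - ∫ x, f.1 x ∂μ

section Metric

variable {A : Type*} {θ : ℝ} {x y : ℕ → A}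

lemma iterate_shift_apply (j k : ℕ) (x : ℕ → A) : shift^[j] x k = x (k + j) := by
  induction j generalizing x with
  | zero => rfl
  | succ j ih => rw [Function.iterate_succ_apply, ih, shift, add_assoc]

lemma dtheta_self (x : ℕ → A) : dtheta θ x x = 0 := if_pos rfl

lemma dtheta_comm (θ : ℝ) (x y : ℕ → A) : dtheta θ x y = dtheta θ y x := by
  rcases eq_or_ne x y with rfl | h
  · rfl
  · rw [dtheta, dtheta, if_neg h, if_neg h.symm]
    simp only [ne_comm]

lemma exists_dtheta_eq_pow (h : x ≠ y) :
    ∃ k, x k ≠ y k ∧ dtheta θ x y = θ ^ k :=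
  ⟨sInf {k | x k ≠ y k}, Nat.sInf_mem (Function.ne_iff.1 h), if_neg h⟩

lemma dtheta_nonneg (hθ : 0 ≤ θ) (x y : ℕ → A) : 0 ≤ dtheta θ x y := by
  rcases eq_or_ne x y with rfl | h
  · rw [dtheta_self]
  · obtain ⟨k, -, hk⟩ := exists_dtheta_eq_pow (θ := θ) h
    exact hk ▸ pow_nonneg hθ k

lemma dtheta_le_one (hθ : 0 ≤ θ) (hθ1 : θ ≤ 1) (x y : ℕ → A) : dtheta θ x y ≤ 1 := by
  rcases eq_or_ne x y with rfl | h
  · rw [dtheta_self]; exact zero_le_one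
  · obtain ⟨k, -, hk⟩ := exists_dtheta_eq_pow (θ := θ) h
    exact hk ▸ pow_le_one₀ hθ hθ1

lemma pow_le_dtheta (hθ : 0 ≤ θ) (hθ1 : θ ≤ 1) {k : ℕ} (h : x k ≠ y k) :
    θ ^ k ≤ dtheta θ x y := by
  have hne : x ≠ y := fun e => h (congrFun e k)
  rw [dtheta, if_neg hne]
  exact pow_le_pow_of_le_one hθ hθ1 (Nat.sInf_le h)

lemma pow_mul_dtheta_iterate_shift_le (hθ : 0 ≤ θ) (hθ1 : θ ≤ 1) (j : ℕ) (x y : ℕ → A) :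
    θ ^ j * dtheta θ (shift^[j] x) (shift^[j] y) ≤ dtheta θ x y := by
  rcases eq_or_ne (shift^[j] x) (shift^[j] y) with h | h
  · rw [h, dtheta_self, mul_zero]
    exact dtheta_nonneg hθ x y
  · obtain ⟨k, hk, hd⟩ := exists_dtheta_eq_pow (θ := θ) h
    rw [iterate_shift_apply, iterate_shift_apply] at hk
    rw [hd, ← pow_add, add_comm]
    exact pow_le_dtheta hθ hθ1 hk

lemma oneLip_const (hθ : 0 ≤ θ) (c : ℝ) : OneLip θ fun _ : ℕ → A => c := fun x y => by
  simpa using dtheta_nonneg hθ x y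

lemma OneLip.add_const {f : (ℕ → A) → ℝ} (hf : OneLip θ f) (c : ℝ) :
    OneLip θ fun x => f x + c := fun x y => by
  simpa using hf x y

lemma oneLip_indicator_of_dependsOn (hθ : 0 ≤ θ) (hθ1 : θ ≤ 1) {L : ℕ} {S : Set (ℕ → A)}
    (hS : DependsOn (· ∈ S) (Set.Iic L)) : OneLip θ (S.indicator fun _ => θ ^ L) := by
  intro x y
  by_cases hxy : ∀ k ∈ Set.Iic L, x k = y k
  · have hmem : x ∈ S ↔ y ∈ S := iff_of_eq (hS hxy)
    by_cases hy : y ∈ S <;> simp [hmem, hy, dtheta_nonneg hθ]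
  · push Not at hxy
    obtain ⟨k, hk, hne⟩ := hxy
    calc |S.indicator (fun _ => θ ^ L) x - S.indicator (fun _ => θ ^ L) y|
        ≤ θ ^ L := by
          have := pow_nonneg hθ L
          by_cases hx : x ∈ S <;> by_cases hy : y ∈ S <;> simp [hx, hy, abs_of_nonneg, this]
      _ ≤ θ ^ k := pow_le_pow_of_le_one hθ hθ1 hk
      _ ≤ dtheta θ x y := pow_le_dtheta hθ hθ1 hne

lemma oneLip_indicator_eval_zero_mem (hθ : 0 ≤ θ) (hθ1 : θ ≤ 1) (B : Set A) :
    OneLip θ ({y : ℕ → A | y 0 ∈ B}.indicator fun _ => 1) := by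
  have hdep : DependsOn (· ∈ {y : ℕ → A | y 0 ∈ B}) (Set.Iic 0) := fun y z hyz =>
    congrArg (· ∈ B) (hyz 0 (Set.mem_Iic.2 le_rfl))
  simpa only [pow_zero] using oneLip_indicator_of_dependsOn hθ hθ1 hdep

end Metric

section General

variable {Ω : Type*} [MeasurableSpace Ω]

lemma nullMeasurableSet_iff_measure_eq_zero {S : Set Ω}
    (hS : ∀ E ⊆ S, MeasurableSet E → E = ∅) (ν : Measure Ω) :
    NullMeasurableSet S ν ↔ ν S = 0 := by
  refine ⟨fun h => ?_, NullMeasurableSet.of_null⟩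
  obtain ⟨E, hES, hE, hae⟩ := h.exists_measurable_subset_ae_eq
  rw [← measure_congr hae, hS E hES hE, measure_empty]

lemma measureReal_lt_one_of_not_ae {μ : Measure Ω} [IsProbabilityMeasure μ] {S : Set Ω}
    (hS : NullMeasurableSet S μ) (h : ¬ ∀ᵐ x ∂μ, x ∈ S) : μ.real S < 1 := by
  refine measureReal_le_one.lt_of_ne fun h1 => h ((mem_ae_iff_prob_eq_one₀ hS).2 ?_)
  rwa [measureReal_def, ENNReal.toReal_eq_one_iff] at h1

lemma ae_eq_dirac_of_measurableSet_singleton {β : Type*} {z : Ω}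
    (hz : MeasurableSet {z}) (f : Ω → β) : f =ᵐ[Measure.dirac z] fun _ => f z := by
  have hae : ∀ᵐ y ∂Measure.dirac z, y = z := (ae_dirac_iff hz).2 rfl
  filter_upwards [hae] with y hy using congrArg f hy

lemma integrable_dirac_of_measurableSet_singleton {z : Ω}
    (hz : MeasurableSet {z}) (f : Ω → ℝ) : Integrable f (Measure.dirac z) :=
  (integrable_const (f z)).congr (ae_eq_dirac_of_measurableSet_singleton hz f).symm

lemma nullMeasurableSet_iff_aestronglyMeasurable_indicator {r : ℝ} (hr : r ≠ 0)
    {S : Set Ω} (ν : Measure Ω) :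
    NullMeasurableSet S ν ↔ AEStronglyMeasurable (S.indicator fun _ => r) ν := by
  have : NeZero r := ⟨hr⟩
  rw [aestronglyMeasurable_iff_aemeasurable, aemeasurable_indicator_const_iff r]

lemma measureReal_abs_ge_le_of_hasSubgaussianMGF {μ : Measure Ω} {X : Ω → ℝ} {c : ℝ≥0}
    (hX : HasSubgaussianMGF X c μ) {ε : ℝ} (hε : 0 ≤ ε) :
    μ.real {ω | ε ≤ |X ω|} ≤ 2 * Real.exp (-ε ^ 2 / (2 * c)) := by
  have hsplit : {ω | ε ≤ |X ω|} = {ω | ε ≤ X ω} ∪ {ω | ε ≤ (-X) ω} := by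
    ext ω
    exact le_abs (a := ε) (b := X ω)
  rw [hsplit, two_mul]
  exact (measureReal_union_le _ _).trans
    (add_le_add (hX.measure_ge_le hε) (hX.neg.measure_ge_le hε))

end General

section Product

variable {ι : Type*} {X : ι → Type*} [∀ i, MeasurableSpace (X i)]

lemma eq_empty_of_measurableSet_of_subset_eval_singleton {i : ι} {a : X i}
    (ha : ¬ MeasurableSet {a}) {E : Set (∀ i, X i)} (hE : MeasurableSet E)
    (hEa : E ⊆ {y | y i = a}) : E = ∅ := by
  classical
  by_contra hne
  obtain ⟨y, hy⟩ := Set.nonempty_iff_ne_empty.2 hne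
  refine ha ?_
  have hslice : Function.update y i ⁻¹' E = {a} := by
    ext b
    refine ⟨fun hb => by simpa using hEa hb, ?_⟩
    rintro rfl
    rwa [Set.mem_preimage, ← hEa hy, Function.update_eq_self]
  exact hslice ▸ measurable_update y hE

lemma measurableSet_singleton_pi_iff [Countable ι] {x : ∀ i, X i} :
    MeasurableSet {x} ↔ ∀ i, MeasurableSet {x i} := by
  have hne : (Set.univ.pi fun i => {x i}).Nonempty := ⟨x, fun _ _ => rfl⟩
  rw [← Set.univ_pi_singleton, measurableSet_pi_of_nonempty Set.countable_univ hne]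
  simp only [Set.mem_univ, forall_const]

lemma eq_dirac_of_forall_ae_eval_mem {μ : Measure (∀ i, X i)} [IsProbabilityMeasure μ]
    {z : ∀ i, X i}
    (h : ∀ i (B : Set (X i)), MeasurableSet B → z i ∈ B → ∀ᵐ y ∂μ, y i ∈ B) :
    μ = Measure.dirac z := by
  have hiff : ∀ E, MeasurableSet E → ∀ᵐ y ∂μ, (y ∈ E ↔ z ∈ E) := by
    intro E hE
    have hgen := MeasurableSpace.measurableSet_iSup.1 hE
    clear hE
    induction hgen with
    | basic E hE =>
      obtain ⟨i, B, hB, rfl⟩ : ∃ i B, MeasurableSet B ∧ (fun y : ∀ i, X i => y i) ⁻¹' B = E := hE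
      by_cases hz : z i ∈ B
      · filter_upwards [h i B hB hz] with y hy using iff_of_true hy hz
      · filter_upwards [h i Bᶜ hB.compl hz] with y hy using iff_of_false hy hz
    | empty => exact ae_of_all μ fun _ => Iff.rfl
    | compl E _ ih => filter_upwards [ih] with y hy using not_congr hy
    | iUnion E _ ih =>
      filter_upwards [ae_all_iff.2 ih] with y hy
      simp only [Set.mem_iUnion, hy]
  ext E hE
  rw [Measure.dirac_apply' _ hE]
  by_cases hz : z ∈ E
  · rw [Set.indicator_of_mem hz, Pi.one_apply, ← mem_ae_iff_prob_eq_one hE]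
    filter_upwards [hiff E hE] with y hy using hy.2 hz
  · rw [Set.indicator_of_notMem hz]
    refine measure_eq_zero_iff_ae_notMem.2 ?_
    filter_upwards [hiff E hE] with y hy using mt hy.1 hz

end Product

section Empirical

variable {A : Type*} [MeasurableSpace A] {n : ℕ} {x : ℕ → A}

lemma empMeas_eq_zero_iff {S : Set (ℕ → A)} :
    empMeas n x S = 0 ↔ ∀ j < n, Measure.dirac (shift^[j] x) S = 0 := by
  simp only [empMeas, Measure.smul_apply, Measure.finsetSum_apply, smul_eq_mul, mul_eq_zero,
    ENNReal.inv_eq_zero, ENNReal.natCast_ne_top, false_or, Finset.sum_eq_zero_iff,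
    Finset.mem_range]

lemma empMeas_eq_of_forall_dirac_eq (hn : 1 ≤ n) {μ : Measure (ℕ → A)}
    (h : ∀ j < n, Measure.dirac (shift^[j] x) = μ) : empMeas n x = μ := by
  have hsum : ∑ j ∈ Finset.range n, Measure.dirac (shift^[j] x) = (n : ℝ≥0∞) • μ := by
    rw [Finset.sum_congr rfl fun j hj => h j (Finset.mem_range.1 hj), Finset.sum_const,
      Finset.card_range, Nat.cast_smul_eq_nsmul]
  have hn0 : (n : ℝ≥0∞) ≠ 0 := Nat.cast_ne_zero.2 (Nat.one_le_iff_ne_zero.1 hn)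
  rw [empMeas, hsum, smul_smul, ENNReal.inv_mul_cancel hn0 (ENNReal.natCast_ne_top n), one_smul]

lemma isProbabilityMeasure_empMeas (hn : 1 ≤ n) (x : ℕ → A) :
    IsProbabilityMeasure (empMeas n x) where
  measure_univ := by
    simp [empMeas, ENNReal.inv_mul_cancel, Nat.one_le_iff_ne_zero.1 hn]

lemma measurableSet_singleton_iterate_shift (hx : MeasurableSet {x}) (j : ℕ) :
    MeasurableSet {shift^[j] x} := by
  rw [measurableSet_singleton_pi_iff] at hx ⊢
  intro k
  rw [iterate_shift_apply]
  exact hx (k + j)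

lemma integrable_empMeas (hn : 1 ≤ n) (hx : MeasurableSet {x}) (f : (ℕ → A) → ℝ) :
    Integrable f (empMeas n x) := by
  refine Integrable.smul_measure (integrable_finsetSum_measure.2 fun j _ => ?_)
    (ENNReal.inv_ne_top.2 (Nat.cast_ne_zero.2 (Nat.one_le_iff_ne_zero.1 hn)))
  exact integrable_dirac_of_measurableSet_singleton (measurableSet_singleton_iterate_shift hx j) f

lemma integral_empMeas (hx : MeasurableSet {x}) (f : (ℕ → A) → ℝ) :
    ∫ y, f y ∂empMeas n x = (n : ℝ)⁻¹ * ∑ i, f (shiftOrbit n x i) := by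
  have hz := measurableSet_singleton_iterate_shift hx
  have hdirac (j : ℕ) : ∫ y, f y ∂Measure.dirac (shift^[j] x) = f (shift^[j] x) := by
    rw [integral_congr_ae (ae_eq_dirac_of_measurableSet_singleton (hz j) f)]
    simp
  rw [empMeas, integral_smul_measure, integral_finsetSum_measure fun j _ =>
    integrable_dirac_of_measurableSet_singleton (hz j) f, Finset.sum_range]
  simp only [hdirac, ENNReal.toReal_inv, ENNReal.toReal_natCast, smul_eq_mul, shiftOrbit]

end Empirical

section Kantorovich

variable {A : Type*} [MeasurableSpace A] {θ : ℝ} {ν₁ ν₂ : Measure (ℕ → A)}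

lemma OneLip.integrable (hθ : 0 ≤ θ) (hθ1 : θ ≤ 1) [IsProbabilityMeasure ν₁] {f : (ℕ → A) → ℝ}
    (hf : OneLip θ f) (hm : AEStronglyMeasurable f ν₁) : Integrable f ν₁ := by
  obtain ⟨z⟩ := ν₁.nonempty_of_neZero
  refine Integrable.of_bound hm (1 + |f z|) (ae_of_all ν₁ fun y => ?_)
  have h1 : |f y - f z| ≤ 1 := (hf y z).trans (dtheta_le_one hθ hθ1 y z)
  have h2 : |f y| - |f z| ≤ |f y - f z| := abs_sub_abs_le_abs_sub (f y) (f z)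
  rw [Real.norm_eq_abs]
  linarith

/- Adding a constant shifts only the integral against the measure for which `f` is measurable;
the other one keeps the junk value `0`. -/
lemma OneLip.exists_integral_eq (hθ : 0 ≤ θ) (hθ1 : θ ≤ 1) [IsProbabilityMeasure ν₁]
    {f : (ℕ → A) → ℝ} (hf : OneLip θ f) (h₁ : AEStronglyMeasurable f ν₁)
    (h₂ : ¬ AEStronglyMeasurable f ν₂) (r : ℝ) :
    ∃ g, OneLip θ g ∧ ∫ y, g y ∂ν₁ = r ∧ ∫ y, g y ∂ν₂ = 0 := by
  refine ⟨_, hf.add_const (r - ∫ y, f y ∂ν₁), ?_, integral_non_aestronglyMeasurable fun hg => ?_⟩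
  · rw [integral_add (hf.integrable hθ hθ1 h₁) (integrable_const _)]
    simp
  · exact h₂ ((hg.sub aestronglyMeasurable_const).congr
      (ae_of_all ν₂ fun y => add_sub_cancel_right (f y) _))

lemma dKant_eq_zero_of_not_iff (hθ : 0 ≤ θ) (hθ1 : θ ≤ 1) [IsProbabilityMeasure ν₁]
    [IsProbabilityMeasure ν₂] {f : (ℕ → A) → ℝ} (hf : OneLip θ f)
    (h : ¬ (AEStronglyMeasurable f ν₁ ↔ AEStronglyMeasurable f ν₂)) : dKant θ ν₁ ν₂ = 0 := by
  refine Real.iSup_of_not_bddAbove fun ⟨M, hM⟩ => ?_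
  obtain ⟨g, hg, hgM⟩ : ∃ g, OneLip θ g ∧ ∫ y, g y ∂ν₁ - ∫ y, g y ∂ν₂ = M + 1 := by
    by_cases h₁ : AEStronglyMeasurable f ν₁
    · have h₂ : ¬ AEStronglyMeasurable f ν₂ := fun h₂ => h (iff_of_true h₁ h₂)
      obtain ⟨g, hg, hg₁, hg₂⟩ := hf.exists_integral_eq hθ hθ1 h₁ h₂ (M + 1)
      exact ⟨g, hg, by rw [hg₁, hg₂, sub_zero]⟩
    · have h₂ : AEStronglyMeasurable f ν₂ := (not_iff.1 h).1 h₁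
      obtain ⟨g, hg, hg₂, hg₁⟩ := hf.exists_integral_eq hθ hθ1 h₂ h₁ (-(M + 1))
      exact ⟨g, hg, by rw [hg₁, hg₂, zero_sub, neg_neg]⟩
  have hle : M + 1 ≤ M := hgM ▸ hM ⟨⟨g, hg⟩, rfl⟩
  linarith

lemma dKant_self (ν : Measure (ℕ → A)) : dKant θ ν ν = 0 := by
  simp only [dKant, sub_self, Real.iSup_const_zero]

lemma nullMeasurableSet_iff_of_dependsOn (hθ : 0 < θ) (hθ1 : θ ≤ 1)
    (h : ∀ f, OneLip θ f → (AEStronglyMeasurable f ν₁ ↔ AEStronglyMeasurable f ν₂))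
    {s : Set ℕ} (hs : s.Finite) {S : Set (ℕ → A)} (hS : DependsOn (· ∈ S) s) :
    NullMeasurableSet S ν₁ ↔ NullMeasurableSet S ν₂ := by
  obtain ⟨L, hL⟩ := hs.bddAbove
  have hr : θ ^ L ≠ 0 := (pow_pos hθ L).ne'
  rw [nullMeasurableSet_iff_aestronglyMeasurable_indicator hr,
    nullMeasurableSet_iff_aestronglyMeasurable_indicator hr]
  exact h _ (oneLip_indicator_of_dependsOn hθ.le hθ1 fun x y hxy =>
    hS fun k hk => hxy k (hL hk))

lemma measure_eq_zero_iff_of_dependsOn (hθ : 0 < θ) (hθ1 : θ ≤ 1)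
    (h : ∀ f, OneLip θ f → (AEStronglyMeasurable f ν₁ ↔ AEStronglyMeasurable f ν₂))
    {s : Set ℕ} (hs : s.Finite) {S : Set (ℕ → A)} (hS : DependsOn (· ∈ S) s)
    {k : ℕ} {a : A} (ha : ¬ MeasurableSet {a}) (hSa : S ⊆ {y | y k = a}) :
    ν₁ S = 0 ↔ ν₂ S = 0 := by
  have hempty (E : Set (ℕ → A)) (hES : E ⊆ S) (hE : MeasurableSet E) : E = ∅ :=
    eq_empty_of_measurableSet_of_subset_eval_singleton ha hE (hES.trans hSa)
  rw [← nullMeasurableSet_iff_measure_eq_zero hempty,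
    ← nullMeasurableSet_iff_measure_eq_zero hempty]
  exact nullMeasurableSet_iff_of_dependsOn hθ hθ1 h hs hS

end Kantorovich

section Concentration

variable {A : Type*} {θ : ℝ} {n : ℕ} {K : (Fin n → ℕ → A) → ℝ} {ℓ : Fin n → ℝ}

lemma sepLip_of_abs_sub_le_sum (h : ∀ X Y, |K X - K Y| ≤ ∑ i, ℓ i * dtheta θ (X i) (Y i)) :
    SepLip θ K ℓ := by
  intro X i y
  refine (h X (Function.update X i y)).trans_eq ?_
  rw [Finset.sum_eq_single_of_mem i (Finset.mem_univ i), Function.update_self]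
  intro j _ hj
  rw [Function.update_of_ne hj, dtheta_self, mul_zero]

lemma SepLip.abs_sub_le_sum (hK : SepLip θ K ℓ) (X Y : Fin n → ℕ → A) :
    |K X - K Y| ≤ ∑ i, ℓ i * dtheta θ (X i) (Y i) := by
  have hstep (s : Finset (Fin n)) :
      |K X - K (s.piecewise Y X)| ≤ ∑ i ∈ s, ℓ i * dtheta θ (X i) (Y i) := by
    induction s using Finset.induction_on with
    | empty => simp
    | insert i s hi ih =>
      rw [Finset.sum_insert hi, Finset.piecewise_insert, add_comm]
      refine (abs_sub_le _ (K (s.piecewise Y X)) _).trans (add_le_add ih ?_)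
      simpa only [Finset.piecewise_eq_of_notMem _ _ _ hi] using hK (s.piecewise Y X) i (Y i)
  simpa using hstep Finset.univ

lemma SepLip.abs_sub_le_sum_abs (hθ : 0 ≤ θ) (hθ1 : θ ≤ 1) (hK : SepLip θ K ℓ)
    (X Y : Fin n → ℕ → A) : |K X - K Y| ≤ ∑ i, |ℓ i| :=
  (hK.abs_sub_le_sum X Y).trans <| Finset.sum_le_sum fun i _ =>
    calc ℓ i * dtheta θ (X i) (Y i) ≤ |ℓ i| * dtheta θ (X i) (Y i) :=
          mul_le_mul_of_nonneg_right (le_abs_self (ℓ i)) (dtheta_nonneg hθ _ _)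
      _ ≤ |ℓ i| := mul_le_of_le_one_right (abs_nonneg _) (dtheta_le_one hθ hθ1 _ _)

lemma SepLip.const_mul (hK : SepLip θ K ℓ) (t : ℝ) :
    SepLip θ (fun X => t * K X) fun i => |t| * ℓ i := fun X i y => by
  rw [← mul_sub, abs_mul, mul_assoc]
  exact mul_le_mul_of_nonneg_left (hK X i y) (abs_nonneg t)

variable [MeasurableSpace A] {C : ℝ} {μ : Measure (ℕ → A)}

lemma GCB.mgf_le (hGCB : GCB θ C μ) (hn : 1 ≤ n) (hK : SepLip θ K ℓ) (t : ℝ) :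
    mgf (fun x => K (shiftOrbit n x) - ∫ y, K (shiftOrbit n y) ∂μ) μ t ≤
      Real.exp (2 * C * (∑ i, ℓ i ^ 2) * t ^ 2 / 2) := by
  have hbound := hGCB n hn _ _ (hK.const_mul t)
  rw [integral_const_mul] at hbound
  have hsum : ∑ i, (|t| * ℓ i) ^ 2 = t ^ 2 * ∑ i, ℓ i ^ 2 := by
    simp only [mul_pow, sq_abs, Finset.mul_sum]
  calc mgf (fun x => K (shiftOrbit n x) - ∫ y, K (shiftOrbit n y) ∂μ) μ t
      = (∫ x, Real.exp (t * K (shiftOrbit n x)) ∂μ) *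
          Real.exp (-(t * ∫ y, K (shiftOrbit n y) ∂μ)) := by
        simp only [mgf, mul_add, mul_neg, sub_eq_add_neg, Real.exp_add, integral_mul_const]
    _ ≤ Real.exp (t * ∫ y, K (shiftOrbit n y) ∂μ) * Real.exp (C * ∑ i, (|t| * ℓ i) ^ 2) *
          Real.exp (-(t * ∫ y, K (shiftOrbit n y) ∂μ)) :=
        mul_le_mul_of_nonneg_right hbound (Real.exp_nonneg _)
    _ = Real.exp (2 * C * (∑ i, ℓ i ^ 2) * t ^ 2 / 2) := by
        rw [hsum, ← Real.exp_add, ← Real.exp_add]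
        ring_nf

variable [IsProbabilityMeasure μ]

lemma GCB.hasSubgaussianMGF (hθ : 0 ≤ θ) (hθ1 : θ ≤ 1) (hGCB : GCB θ C μ) (hn : 1 ≤ n)
    (hK : SepLip θ K ℓ) (hm : AEMeasurable (fun x => K (shiftOrbit n x)) μ) :
    HasSubgaussianMGF (fun x => K (shiftOrbit n x) - ∫ y, K (shiftOrbit n y) ∂μ)
      (2 * C * ∑ i, ℓ i ^ 2).toNNReal μ where
  integrable_exp_mul t := by
    obtain ⟨z⟩ := μ.nonempty_of_neZero
    set m := ∫ y, K (shiftOrbit n y) ∂μ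
    refine integrable_exp_mul_of_mem_Icc (a := K (shiftOrbit n z) - (∑ i, |ℓ i|) - m)
      (b := K (shiftOrbit n z) + (∑ i, |ℓ i|) - m) (hm.sub_const m) (ae_of_all μ fun x => ?_)
    have hosc := abs_le.1 (hK.abs_sub_le_sum_abs hθ hθ1 (shiftOrbit n x) (shiftOrbit n z))
    exact ⟨by linarith, by linarith⟩
  mgf_le t := by
    refine (hGCB.mgf_le hn hK t).trans (Real.exp_le_exp.2 ?_)
    gcongr
    exact Real.le_coe_toNNReal _

lemma GCB.hasSubgaussianMGF_sum (hθ : 0 ≤ θ) (hθ1 : θ ≤ 1) (hinv : MeasurePreserving shift μ μ)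
    (hGCB : GCB θ C μ) (hn : 1 ≤ n) {f : Fin n → (ℕ → A) → ℝ} (hf : ∀ i, OneLip θ (f i))
    (hm : ∀ i, AEStronglyMeasurable (f i) μ) :
    HasSubgaussianMGF (fun x => ∑ i, f i (shiftOrbit n x i) - ∑ i, ∫ y, f i y ∂μ)
      (2 * C * n).toNNReal μ := by
  have hK : SepLip θ (fun X : Fin n → ℕ → A => ∑ i, f i (X i)) fun _ => 1 := by
    refine sepLip_of_abs_sub_le_sum fun X Y => ?_
    rw [← Finset.sum_sub_distrib]
    refine (Finset.abs_sum_le_sum_abs _ _).trans (Finset.sum_le_sum fun i _ => ?_)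
    exact (hf i (X i) (Y i)).trans_eq (one_mul _).symm
  have hT (i : Fin n) : MeasurePreserving shift^[(i : ℕ)] μ μ := hinv.iterate i
  have hm_orbit (i : Fin n) : AEStronglyMeasurable (fun x => f i (shiftOrbit n x i)) μ :=
    (hm i).comp_measurePreserving (hT i)
  have hint (i : Fin n) : Integrable (fun x => f i (shiftOrbit n x i)) μ :=
    (hT i).integrable_comp_of_integrable ((hf i).integrable hθ hθ1 (hm i))
  have hmean (i : Fin n) : ∫ x, f i (shiftOrbit n x i) ∂μ = ∫ y, f i y ∂μ := by
    have hmap : AEStronglyMeasurable (f i) (μ.map shift^[(i : ℕ)]) := (hT i).map_eq.symm ▸ hm i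
    rw [← (hT i).map_eq, integral_map (hT i).aemeasurable hmap, (hT i).map_eq]
    rfl
  have hsub := hGCB.hasSubgaussianMGF hθ hθ1 hn hK
    (Finset.aemeasurable_fun_sum _ fun i _ => (hm_orbit i).aemeasurable)
  rw [integral_finsetSum _ fun i _ => hint i, Finset.sum_congr rfl fun i _ => hmean i] at hsub
  simpa using hsub

end Concentration

section ZeroOne

variable {A : Type*} [MeasurableSpace A] {θ C : ℝ} {μ : Measure (ℕ → A)}

lemma ae_forall_eval_mem (hinv : MeasurePreserving shift μ μ) {T : Set A}
    (h : ∀ᵐ y ∂μ, y 0 ∈ T) : ∀ᵐ y ∂μ, ∀ i, y i ∈ T := by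
  refine ae_all_iff.2 fun i => ?_
  filter_upwards [(hinv.iterate i).quasiMeasurePreserving.ae h] with y hy
  simpa only [iterate_shift_apply, zero_add] using hy

variable [IsProbabilityMeasure μ]

lemma GCB.measureReal_forall_mem_le (hθ : 0 ≤ θ) (hθ1 : θ ≤ 1) (hinv : MeasurePreserving shift μ μ)
    (hC : 0 < C) (hGCB : GCB θ C μ) {n : ℕ} (hn : 1 ≤ n) {B : Fin n → Set A} {q : ℝ} (hq : q ≤ 1)
    (hm : ∀ i, NullMeasurableSet {y : ℕ → A | y 0 ∈ B i} μ)
    (hB : ∀ i, μ.real {y | y 0 ∈ B i} ≤ q) :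
    μ.real {y | ∀ i : Fin n, y i ∈ B i} ≤ Real.exp (-(n * ((1 - q) ^ 2 / (4 * C)))) := by
  let f (i : Fin n) : (ℕ → A) → ℝ := {y : ℕ → A | y 0 ∈ B i}.indicator fun _ => 1
  have hf (i : Fin n) : OneLip θ (f i) := oneLip_indicator_eval_zero_mem hθ hθ1 (B i)
  have hfm (i : Fin n) : AEStronglyMeasurable (f i) μ :=
    (nullMeasurableSet_iff_aestronglyMeasurable_indicator one_ne_zero μ).1 (hm i)
  have hmean : ∑ i, ∫ y, f i y ∂μ ≤ n * q := by
    refine (Finset.sum_le_card_nsmul _ _ q fun i _ => ?_).trans_eq (by simp)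
    rw [integral_indicator₀ (hm i), setIntegral_const, smul_eq_mul, mul_one]
    exact hB i
  have hsub : {y | ∀ i : Fin n, y i ∈ B i} ⊆
      {y | n * (1 - q) ≤ ∑ i, f i (shiftOrbit n y i) - ∑ i, ∫ y, f i y ∂μ} := by
    intro y hy
    have hone (i : Fin n) : f i (shiftOrbit n y i) = 1 := by
      refine Set.indicator_of_mem ?_ _
      rw [shiftOrbit, Set.mem_ofPred_eq, iterate_shift_apply, zero_add]
      exact hy i
    simp only [Set.mem_ofPred_eq, hone, Finset.sum_const, Finset.card_univ, Fintype.card_fin,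
      nsmul_eq_mul]
    linarith
  have hn0 : (0 : ℝ) < n := by exact_mod_cast hn
  have hsum := hGCB.hasSubgaussianMGF_sum hθ hθ1 hinv hn hf hfm
  refine (measureReal_mono hsub).trans ((hsum.measure_ge_le
    (mul_nonneg hn0.le (sub_nonneg.2 hq))).trans_eq ?_)
  rw [Real.coe_toNNReal _ (by positivity)]
  congr 1
  field_simp
  ring

lemma GCB.measure_forall_mem_eq_zero (hθ : 0 ≤ θ) (hθ1 : θ ≤ 1)
    (hinv : MeasurePreserving shift μ μ) (hC : 0 < C) (hGCB : GCB θ C μ) {B : ℕ → Set A} {q : ℝ}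
    (hq : q < 1) (hm : ∀ i, NullMeasurableSet {y : ℕ → A | y 0 ∈ B i} μ)
    (hB : ∀ i, μ.real {y | y 0 ∈ B i} ≤ q) : μ {y | ∀ i, y i ∈ B i} = 0 := by
  have hrate : 0 < (1 - q) ^ 2 / (4 * C) := by
    have := sub_pos.2 hq
    positivity
  have hlim : Tendsto (fun n : ℕ => Real.exp (-(n * ((1 - q) ^ 2 / (4 * C))))) atTop (𝓝 0) :=
    Real.tendsto_exp_neg_atTop_nhds_zero.comp
      (tendsto_natCast_atTop_atTop.atTop_mul_const hrate)
  rw [← measureReal_eq_zero_iff]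
  refine le_antisymm (ge_of_tendsto hlim ?_) measureReal_nonneg
  filter_upwards [eventually_ge_atTop 1] with n hn
  have hsub : {y : ℕ → A | ∀ i, y i ∈ B i} ⊆ {y | ∀ i : Fin n, y i ∈ B i} := fun y hy i => hy i
  exact (measureReal_mono hsub).trans <| hGCB.measureReal_forall_mem_le hθ hθ1 hinv hC hn hq.le
    (fun i => hm i) fun i => hB i

lemma GCB.measure_itinerary_eq_zero (hθ : 0 ≤ θ) (hθ1 : θ ≤ 1)
    (hinv : MeasurePreserving shift μ μ) (hC : 0 < C) (hGCB : GCB θ C μ) {B : Set A}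
    (hB : MeasurableSet B) (h0 : ¬ ∀ᵐ y ∂μ, y 0 ∈ Bᶜ) (h1 : ¬ ∀ᵐ y ∂μ, y 0 ∈ B) (x : ℕ → A) :
    μ {y | ∀ i, y i ∈ B ↔ x i ∈ B} = 0 := by
  classical
  have hcyl (s : Set A) (hs : MeasurableSet s) : NullMeasurableSet {y : ℕ → A | y 0 ∈ s} μ :=
    (measurable_pi_apply 0 hs).nullMeasurableSet
  let D (i : ℕ) : Set A := if x i ∈ B then B else Bᶜ
  have hD (i : ℕ) : D i = B ∨ D i = Bᶜ := ite_eq_or_eq _ _ _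
  have hset : {y : ℕ → A | ∀ i, y i ∈ B ↔ x i ∈ B} = {y | ∀ i, y i ∈ D i} := by
    ext y
    refine forall_congr' fun i => ?_
    by_cases hi : x i ∈ B <;> simp [D, hi]
  rw [hset]
  refine hGCB.measure_forall_mem_eq_zero hθ hθ1 hinv hC
    (q := max (μ.real {y | y 0 ∈ B}) (μ.real {y : ℕ → A | y 0 ∈ Bᶜ}))
    (max_lt (measureReal_lt_one_of_not_ae (hcyl B hB) h1)
      (measureReal_lt_one_of_not_ae (hcyl Bᶜ hB.compl) h0)) (fun i => ?_) fun i => ?_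
  · rcases hD i with h | h <;> rw [h]
    exacts [hcyl B hB, hcyl Bᶜ hB.compl]
  · rcases hD i with h | h <;> rw [h]
    exacts [le_max_left _ _, le_max_right _ _]

lemma GCB.ae_forall_mem_or_ae_not (hθ : 0 ≤ θ) (hθ1 : θ ≤ 1)
    (hinv : MeasurePreserving shift μ μ) (hC : 0 < C) (hGCB : GCB θ C μ) {T : Set A}
    (hT : NullMeasurableSet {y : ℕ → A | y 0 ∈ T} μ) :
    (∀ᵐ y ∂μ, ∀ i, y i ∈ T) ∨ ∀ᵐ y ∂μ, ¬ ∀ i, y i ∈ T := by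
  by_cases h1 : ∀ᵐ y ∂μ, y 0 ∈ T
  · exact Or.inl (ae_forall_eval_mem hinv h1)
  · have hlt : μ.real {y : ℕ → A | y 0 ∈ T} < 1 := measureReal_lt_one_of_not_ae hT h1
    exact Or.inr (measure_eq_zero_iff_ae_notMem.1 (hGCB.measure_forall_mem_eq_zero hθ hθ1 hinv hC
      hlt (fun _ => hT) fun _ => le_rfl))

end ZeroOne

section NonmeasurableSingletons

variable {A : Type*} [MeasurableSpace A] {θ C : ℝ} {n : ℕ} {x : ℕ → A} {μ : Measure (ℕ → A)}

lemma empMeas_forall_not_iff_eq_zero {B : Set A} (hB : MeasurableSet B) (i : Fin n → ℕ) :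
    empMeas n x {y | ∀ j : Fin n, ¬ (y (i j) ∈ B ↔ shift^[j] x (i j) ∈ B)} = 0 := by
  refine empMeas_eq_zero_iff.2 fun j hj => ?_
  let V : Set (ℕ → A) := {y | ¬ (y (i ⟨j, hj⟩) ∈ B ↔ shift^[j] x (i ⟨j, hj⟩) ∈ B)}
  have hV : MeasurableSet V :=
    ((measurable_pi_apply (i ⟨j, hj⟩) hB).iff (MeasurableSet.const _)).compl
  exact measure_mono_null (t := V) (fun y hy => hy ⟨j, hj⟩)
    ((dirac_eq_zero_iff_not_mem hV).2 (not_not.2 Iff.rfl))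

lemma measure_ne_zero_of_mem_of_dependsOn (hθ : 0 < θ) (hθ1 : θ ≤ 1) (hn : 1 ≤ n)
    (h : ∀ f, OneLip θ f → (AEStronglyMeasurable f (empMeas n x) ↔ AEStronglyMeasurable f μ))
    {k : ℕ} (hk : ¬ MeasurableSet {x k}) {s : Set ℕ} (hs : s.Finite) {S : Set (ℕ → A)}
    (hS : DependsOn (· ∈ S) s) (hSk : S ⊆ {y | y k = x k}) (hxS : x ∈ S) : μ S ≠ 0 := by
  intro hμ
  have hzero := (measure_eq_zero_iff_of_dependsOn hθ hθ1 h hs hS hk hSk).2 hμ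
  have hdirac := empMeas_eq_zero_iff.1 hzero 0 hn
  rw [Function.iterate_zero_apply, Measure.dirac_apply_of_mem hxS] at hdirac
  exact one_ne_zero hdirac

variable [IsProbabilityMeasure μ]

/- A point of `{y | y k = x k}` outside the itineraries of `x, …, Tⁿ⁻¹x` disagrees with each of
them at some time, hence lies in one of countably many cylinders that are null for `empMeas n x`,
and therefore for `μ`. -/
lemma GCB.ae_eval_mem_of_not_measurableSet (hθ : 0 < θ) (hθ1 : θ ≤ 1)
    (hinv : MeasurePreserving shift μ μ) (hC : 0 < C) (hGCB : GCB θ C μ) (hn : 1 ≤ n)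
    (h : ∀ f, OneLip θ f → (AEStronglyMeasurable f (empMeas n x) ↔ AEStronglyMeasurable f μ))
    {k : ℕ} (hk : ¬ MeasurableSet {x k}) {l : ℕ} {B : Set A} (hB : MeasurableSet B)
    (hl : x l ∈ B) : ∀ᵐ y ∂μ, y 0 ∈ B := by
  by_contra h1
  have h0 : ¬ ∀ᵐ y ∂μ, y 0 ∈ Bᶜ := fun hae => by
    have hdep : DependsOn (· ∈ {y : ℕ → A | y k = x k ∧ y l ∈ B}) {k, l} := fun y z hyz => by
      simp [hyz]
    refine measure_ne_zero_of_mem_of_dependsOn hθ hθ1 hn h hk (Set.toFinite {k, l}) hdep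
      (fun y hy => hy.1) ⟨rfl, hl⟩ (measure_eq_zero_iff_ae_notMem.2 ?_)
    exact (ae_forall_eval_mem hinv hae).mono fun y hy hyB => hy l hyB.2
  let U (i : Fin n → ℕ) : Set (ℕ → A) :=
    {y | y k = x k ∧ ∀ j : Fin n, ¬ (y (i j) ∈ B ↔ shift^[j] x (i j) ∈ B)}
  have hU (i : Fin n → ℕ) : μ (U i) = 0 := by
    have hdep : DependsOn (· ∈ U i) (insert k (Set.range i)) := fun y z hyz => by
      simp [U, hyz]
    refine (measure_eq_zero_iff_of_dependsOn hθ hθ1 h ((Set.finite_range i).insert k) hdep hk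
      fun y hy => hy.1).1 ?_
    exact measure_mono_null (fun y hy => hy.2) (empMeas_forall_not_iff_eq_zero hB i)
  have hcover : {y | y k = x k} ⊆
      (⋃ j : Fin n, {y | ∀ i, y i ∈ B ↔ shift^[j] x i ∈ B}) ∪ ⋃ i, U i := by
    intro y hy
    by_cases hyB : ∃ j : Fin n, ∀ i, y i ∈ B ↔ shift^[j] x i ∈ B
    · exact Or.inl (Set.mem_iUnion.2 hyB)
    · choose i hi using fun j => not_forall.1 (not_exists.1 hyB j)
      exact Or.inr (Set.mem_iUnion.2 ⟨i, hy, hi⟩)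
  have hdep : DependsOn (· ∈ {y : ℕ → A | y k = x k}) {k} := fun y z hyz => by simp [hyz]
  refine measure_ne_zero_of_mem_of_dependsOn hθ hθ1 hn h hk (Set.finite_singleton k) hdep
    subset_rfl rfl (measure_mono_null hcover (measure_union_null ?_ (measure_iUnion_null hU)))
  exact measure_iUnion_null fun j =>
    hGCB.measure_itinerary_eq_zero hθ.le hθ1 hinv hC hB h0 h1 (shift^[j] x)

lemma GCB.empMeas_eq_of_not_measurableSet_singleton (hθ : 0 < θ) (hθ1 : θ ≤ 1)
    (hinv : MeasurePreserving shift μ μ) (hC : 0 < C) (hGCB : GCB θ C μ) (hn : 1 ≤ n)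
    (h : ∀ f, OneLip θ f → (AEStronglyMeasurable f (empMeas n x) ↔ AEStronglyMeasurable f μ))
    (hx : ¬ MeasurableSet {x}) : empMeas n x = μ := by
  obtain ⟨k, hk⟩ : ∃ k, ¬ MeasurableSet {x k} := by
    simpa only [measurableSet_singleton_pi_iff, not_forall] using hx
  refine empMeas_eq_of_forall_dirac_eq hn fun j _ => (eq_dirac_of_forall_ae_eval_mem ?_).symm
  intro i B hB hi
  rw [iterate_shift_apply] at hi
  have hae := hGCB.ae_eval_mem_of_not_measurableSet hθ hθ1 hinv hC hn h hk hB hi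
  exact (ae_forall_eval_mem hinv hae).mono fun y hy => hy i

lemma GCB.dKant_empMeas_eq_zero (hθ : 0 < θ) (hθ1 : θ ≤ 1)
    (hinv : MeasurePreserving shift μ μ) (hC : 0 < C) (hGCB : GCB θ C μ) (hn : 1 ≤ n)
    (hx : ¬ (OneLipMeasurable θ μ ∧ MeasurableSet {x})) : dKant θ (empMeas n x) μ = 0 := by
  have := isProbabilityMeasure_empMeas hn x
  by_contra hne
  have h (f : (ℕ → A) → ℝ) (hf : OneLip θ f) :
      AEStronglyMeasurable f (empMeas n x) ↔ AEStronglyMeasurable f μ :=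
    not_not.1 fun hiff => hne (dKant_eq_zero_of_not_iff hθ.le hθ1 hf hiff)
  by_cases hxm : MeasurableSet {x}
  · exact hx ⟨fun f hf => (h f hf).1 (integrable_empMeas hn hxm f).aestronglyMeasurable, hxm⟩
  · have heq := hGCB.empMeas_eq_of_not_measurableSet_singleton hθ hθ1 hinv hC hn h hxm
    exact hne (by rw [heq, dKant_self])

lemma GCB.ae_dKant_eq_zero_or (hθ : 0 < θ) (hθ1 : θ ≤ 1) (hinv : MeasurePreserving shift μ μ)
    (hC : 0 < C) (hGCB : GCB θ C μ) (hn : 1 ≤ n) :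
    (∀ᵐ x ∂μ, dKant θ (empMeas n x) μ = 0) ∨
      OneLipMeasurable θ μ ∧ ∀ᵐ x ∂μ, MeasurableSet {x} := by
  by_cases hm : OneLipMeasurable θ μ
  · have hT : NullMeasurableSet {y : ℕ → A | y 0 ∈ {a : A | MeasurableSet {a}}} μ :=
      (nullMeasurableSet_iff_aestronglyMeasurable_indicator one_ne_zero μ).2
        (hm _ (oneLip_indicator_eval_zero_mem hθ.le hθ1 _))
    simp only [measurableSet_singleton_pi_iff]
    refine (hGCB.ae_forall_mem_or_ae_not hθ.le hθ1 hinv hC hT).symm.imp (fun hae => ?_)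
      (And.intro hm)
    filter_upwards [hae] with x hx
    exact hGCB.dKant_empMeas_eq_zero hθ hθ1 hinv hC hn
      fun h => hx (measurableSet_singleton_pi_iff.1 h.2)
  · exact Or.inl (ae_of_all μ fun x =>
      hGCB.dKant_empMeas_eq_zero hθ hθ1 hinv hC hn fun h => hm h.1)

end NonmeasurableSingletons

section SampleKantorovich

variable {A : Type*} [MeasurableSpace A] {θ C : ℝ} {n : ℕ} {μ : Measure (ℕ → A)}

lemma dKant_empMeas_eq_sampleKant {x : ℕ → A} (hx : MeasurableSet {x}) :
    dKant θ (empMeas n x) μ = sampleKant θ μ (shiftOrbit n x) := by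
  simp only [dKant, sampleKant, integral_empMeas hx, OneLip]

variable [IsProbabilityMeasure μ]

lemma OneLip.average_sub_integral_le_one (hθ : 0 ≤ θ) (hθ1 : θ ≤ 1) (hn : 1 ≤ n)
    {f : (ℕ → A) → ℝ} (hf : OneLip θ f) (hm : AEStronglyMeasurable f μ) (X : Fin n → ℕ → A) :
    (n : ℝ)⁻¹ * ∑ i, f (X i) - ∫ y, f y ∂μ ≤ 1 := by
  have hpoint (z : ℕ → A) : f z - 1 ≤ ∫ y, f y ∂μ := by
    have hle (y : ℕ → A) : f z - 1 ≤ f y := by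
      linarith [(abs_le.1 (hf z y)).2, dtheta_le_one hθ hθ1 z y]
    simpa using integral_mono (integrable_const (μ := μ) (f z - 1)) (hf.integrable hθ hθ1 hm) hle
  have hn0 : (0 : ℝ) < n := by exact_mod_cast hn
  have hsum : ∑ i, f (X i) ≤ n * (∫ y, f y ∂μ + 1) := by
    simpa only [Finset.card_univ, Fintype.card_fin, nsmul_eq_mul] using
      Finset.sum_le_card_nsmul Finset.univ (fun i => f (X i)) _
        fun i _ => sub_le_iff_le_add.1 (hpoint (X i))
  rw [sub_le_iff_le_add', inv_mul_le_iff₀ hn0]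
  exact hsum

lemma sampleKant_le_add (hθ : 0 ≤ θ) (hθ1 : θ ≤ 1) (hn : 1 ≤ n) (hm : OneLipMeasurable θ μ)
    (X Y : Fin n → ℕ → A) :
    sampleKant θ μ X ≤ sampleKant θ μ Y + ∑ i, (n : ℝ)⁻¹ * dtheta θ (X i) (Y i) := by
  have : Nonempty {f : (ℕ → A) → ℝ // OneLip θ f} := ⟨⟨_, oneLip_const hθ 0⟩⟩
  refine ciSup_le fun f => ?_
  have hbdd : BddAbove (Set.range fun f : {f : (ℕ → A) → ℝ // OneLip θ f} =>
      (n : ℝ)⁻¹ * ∑ i, f.1 (Y i) - ∫ y, f.1 y ∂μ) :=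
    ⟨1, Set.forall_mem_range.2 fun f => f.2.average_sub_integral_le_one hθ hθ1 hn (hm _ f.2) Y⟩
  have hterm : ∑ i, f.1 (X i) ≤ ∑ i, f.1 (Y i) + ∑ i, dtheta θ (X i) (Y i) := by
    rw [← Finset.sum_add_distrib]
    exact Finset.sum_le_sum fun i _ => sub_le_iff_le_add'.1 (abs_le.1 (f.2 (X i) (Y i))).2
  rw [← Finset.mul_sum]
  calc (n : ℝ)⁻¹ * ∑ i, f.1 (X i) - ∫ y, f.1 y ∂μ
      ≤ (n : ℝ)⁻¹ * (∑ i, f.1 (Y i) + ∑ i, dtheta θ (X i) (Y i)) - ∫ y, f.1 y ∂μ := by gcongr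
    _ = ((n : ℝ)⁻¹ * ∑ i, f.1 (Y i) - ∫ y, f.1 y ∂μ) +
          (n : ℝ)⁻¹ * ∑ i, dtheta θ (X i) (Y i) := by ring
    _ ≤ sampleKant θ μ Y + (n : ℝ)⁻¹ * ∑ i, dtheta θ (X i) (Y i) :=
        add_le_add_left (le_ciSup hbdd f) _

lemma sampleKant_abs_sub_le_sum (hθ : 0 ≤ θ) (hθ1 : θ ≤ 1) (hn : 1 ≤ n)
    (hm : OneLipMeasurable θ μ) (X Y : Fin n → ℕ → A) :
    |sampleKant θ μ X - sampleKant θ μ Y| ≤ ∑ i, (n : ℝ)⁻¹ * dtheta θ (X i) (Y i) := by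
  refine abs_sub_le_iff.2 ⟨?_, ?_⟩
  · exact sub_le_iff_le_add'.2 (sampleKant_le_add hθ hθ1 hn hm X Y)
  · simp only [dtheta_comm θ (X _)]
    exact sub_le_iff_le_add'.2 (sampleKant_le_add hθ hθ1 hn hm Y X)

lemma oneLip_pow_mul_sampleKant (hθ : 0 ≤ θ) (hθ1 : θ ≤ 1) (hn : 1 ≤ n)
    (hm : OneLipMeasurable θ μ) :
    OneLip θ fun x => θ ^ n * sampleKant θ μ (shiftOrbit n x) := by
  intro x y
  have hterm (i : Fin n) :
      θ ^ n * dtheta θ (shiftOrbit n x i) (shiftOrbit n y i) ≤ dtheta θ x y := by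
    refine le_trans ?_ (pow_mul_dtheta_iterate_shift_le hθ hθ1 i x y)
    exact mul_le_mul_of_nonneg_right (pow_le_pow_of_le_one hθ hθ1 i.is_lt.le)
      (dtheta_nonneg hθ _ _)
  calc |θ ^ n * sampleKant θ μ (shiftOrbit n x) - θ ^ n * sampleKant θ μ (shiftOrbit n y)|
      = θ ^ n * |sampleKant θ μ (shiftOrbit n x) - sampleKant θ μ (shiftOrbit n y)| := by
        rw [← mul_sub, abs_mul, abs_of_nonneg (pow_nonneg hθ n)]
    _ ≤ θ ^ n * ∑ i, (n : ℝ)⁻¹ * dtheta θ (shiftOrbit n x i) (shiftOrbit n y i) :=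
        mul_le_mul_of_nonneg_left (sampleKant_abs_sub_le_sum hθ hθ1 hn hm _ _) (pow_nonneg hθ n)
    _ = (n : ℝ)⁻¹ * ∑ i, θ ^ n * dtheta θ (shiftOrbit n x i) (shiftOrbit n y i) := by
        rw [← Finset.mul_sum, ← Finset.mul_sum, mul_left_comm]
    _ ≤ (n : ℝ)⁻¹ * ∑ _i : Fin n, dtheta θ x y := by
        gcongr with i
        exact hterm i
    _ = dtheta θ x y := by
        have : (n : ℝ) ≠ 0 := by exact_mod_cast Nat.one_le_iff_ne_zero.1 hn
        simp [this]

lemma aemeasurable_sampleKant (hθ : 0 < θ) (hθ1 : θ ≤ 1) (hn : 1 ≤ n)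
    (hm : OneLipMeasurable θ μ) : AEMeasurable (fun x => sampleKant θ μ (shiftOrbit n x)) μ := by
  have hpow := (hm _ (oneLip_pow_mul_sampleKant hθ.le hθ1 hn hm)).aemeasurable
  simpa [hθ.ne'] using hpow.const_mul (θ ^ n)⁻¹

lemma GCB.exists_sepLip_dKant_ae_eq (hθ : 0 < θ) (hθ1 : θ ≤ 1) (hC : 0 < C) (hGCB : GCB θ C μ)
    (hinv : MeasurePreserving shift μ μ) (hn : 1 ≤ n) :
    ∃ K : (Fin n → ℕ → A) → ℝ, SepLip θ K (fun _ => (n : ℝ)⁻¹) ∧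
      AEMeasurable (fun x => K (shiftOrbit n x)) μ ∧
      (fun x => dKant θ (empMeas n x) μ) =ᵐ[μ] fun x => K (shiftOrbit n x) := by
  rcases hGCB.ae_dKant_eq_zero_or hθ hθ1 hinv hC hn with hzero | ⟨hm, hgood⟩
  · refine ⟨fun _ => 0, sepLip_of_abs_sub_le_sum fun X Y => ?_, aemeasurable_const, hzero⟩
    rw [sub_self, abs_zero]
    exact Finset.sum_nonneg fun i _ => mul_nonneg (by positivity) (dtheta_nonneg hθ.le _ _)
  · exact ⟨sampleKant θ μ, sepLip_of_abs_sub_le_sum (sampleKant_abs_sub_le_sum hθ.le hθ1 hn hm),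
      aemeasurable_sampleKant hθ hθ1 hn hm, hgood.mono fun x hx => dKant_empMeas_eq_sampleKant hx⟩

lemma GCB.hasSubgaussianMGF_dKant (hθ : 0 < θ) (hθ1 : θ ≤ 1) (hC : 0 < C) (hGCB : GCB θ C μ)
    (hinv : MeasurePreserving shift μ μ) (hn : 1 ≤ n) :
    HasSubgaussianMGF (fun x => dKant θ (empMeas n x) μ - ∫ y, dKant θ (empMeas n y) μ ∂μ)
      (2 * C / n).toNNReal μ := by
  obtain ⟨K, hK, hm, hae⟩ := hGCB.exists_sepLip_dKant_ae_eq hθ hθ1 hC hinv hn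
  have hvar : 2 * C * ∑ _i : Fin n, ((n : ℝ)⁻¹) ^ 2 = 2 * C / n := by
    have : (n : ℝ) ≠ 0 := by exact_mod_cast Nat.one_le_iff_ne_zero.1 hn
    rw [Finset.sum_const, Finset.card_univ, Fintype.card_fin, nsmul_eq_mul]
    field_simp
  rw [integral_congr_ae hae, ← hvar]
  exact (hGCB.hasSubgaussianMGF hθ.le hθ1 hn hK hm).congr (hae.symm.sub .rfl)

end SampleKantorovich

/-- concentration of the Kantorovich distance between the empirical measure
and the invariant measure. -/
theorem stmt9 {A : Type*} [MeasurableSpace A]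
    (θ : ℝ) (hθ0 : 0 < θ) (hθ1 : θ < 1) (C : ℝ) (hC : 0 < C)
    (μ : Measure (ℕ → A)) [IsProbabilityMeasure μ]
    (hinv : MeasurePreserving shift μ μ) (hGCB : GCB θ C μ)
    (u : ℝ) (hu : 0 < u) (n : ℕ) (hn : 1 ≤ n) :
    μ {x : ℕ → A |
        |dKant θ (empMeas n x) μ - ∫ y, dKant θ (empMeas n y) μ ∂μ| ≥ u} ≤
      ENNReal.ofReal (2 * Real.exp (-((n : ℝ) * u ^ 2) / (4 * C))) := by
  have htail := measureReal_abs_ge_le_of_hasSubgaussianMGF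
    (hGCB.hasSubgaussianMGF_dKant hθ0 hθ1.le hC hinv hn) hu.le
  have hn0 : (0 : ℝ) < n := by exact_mod_cast hn
  have hexp : -u ^ 2 / (2 * (2 * C / n)) = -(n * u ^ 2) / (4 * C) := by
    field_simp
    norm_num
  rw [Real.coe_toNNReal _ (by positivity), hexp] at htail
  rw [← ofReal_measureReal]
  exact ENNReal.ofReal_le_ofReal htail
end
end
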